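/- arXiv:2112.01647 — 4 statements merged into one kernel-verified Lean document; each statement's English description precedes it below -/
import Mathlib

section
/- Let d ≥ 3, let 0 < δ ≤ 1/10, and let G be a d-regular graph on n vertices that is bicycle-free at radius r. If 3 ≤ k ≤ e^{δr}, then the total number of singleton-free (k−1)-hikes in G is at most (2^{γ₂}·√(d−1))^{2k}, where γ₂ = log₂(16·n·k³·r·d)/(2k) + log₂(rk)/r + H₂(5δ)/2 + δ·log₂(d). -/
open scoped Classical

noncomputable section

/-- The ball of radius `r` about `v` in `G` (within the connected component of `v`). -/
def gBall {V : Type*} (G : SimpleGraph V) (v : V) (r : ℕ) : Set V :=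
  {u | G.Reachable v u ∧ G.dist v u ≤ r}

/-- `G` is bicycle-free at radius `r`: the subgraph induced on every ball of radius `r`
has at most as many edges as vertices. -/
def BicycleFree {V : Type*} (G : SimpleGraph V) (r : ℕ) : Prop :=
  ∀ v : V,
    (G.edgeSet ∩ {e : Sym2 V | ∀ x ∈ e, x ∈ gBall G v r}).ncard ≤ (gBall G v r).ncard

/-- A `k`-hike in `G`: a closed walk `v₀, …, v_{2k}` with `v₀ = v_{2k}` in which every
step except possibly the `(k+1)`-st is non-backtracking. -/
def IsHike {V : Type*} (G : SimpleGraph V) (k : ℕ) (f : Fin (2 * k + 1) → V) : Prop :=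
  (∀ (i : ℕ) (h : i < 2 * k), G.Adj (f ⟨i, by omega⟩) (f ⟨i + 1, by omega⟩)) ∧
  f ⟨2 * k, by omega⟩ = f ⟨0, by omega⟩ ∧
  ∀ (i : ℕ) (h1 : 1 ≤ i) (h2 : i < 2 * k), i ≠ k → f ⟨i + 1, by omega⟩ ≠ f ⟨i - 1, by omega⟩

/-- The number of steps of the closed walk `f` traversing the undirected edge `e`. -/
def edgeCount {V : Type*} [DecidableEq V] (k : ℕ) (f : Fin (2 * k + 1) → V)
    (e : Sym2 V) : ℕ :=
  (Finset.univ.filter fun i : Fin (2 * k) =>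
    s(f ⟨i.1, Nat.lt_succ_of_lt i.2⟩, f ⟨i.1 + 1, Nat.succ_lt_succ i.2⟩) = e).card

/-- A hike is singleton-free if no edge is traversed exactly once. -/
def IsSingletonFree {V : Type*} [DecidableEq V] (k : ℕ) (f : Fin (2 * k + 1) → V) : Prop :=
  ∀ e : Sym2 V, edgeCount k f e ≠ 1

/-- The binary entropy function `H₂`. -/
def binEnt (x : ℝ) : ℝ := -x * Real.logb 2 x - (1 - x) * Real.logb 2 (1 - x)

/-!
Let `m = k - 1`. A ball of radius `r` is a tree plus at most one edge, and a non-backtracking walk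
of given length and endpoints in such a graph is determined by the direction, if any, in which it
crosses the extra edge. So `G` has at most three non-backtracking walks of given length `≤ r`
between two given vertices.

The edges of a singleton-free `m`-hike form a set `S` with at most `m` elements. Strip `S` of its
leaves and count non-backtracking walks of length `r` in what remains: from each vertex
there are at most three times as many as there are vertices, while Jensen's inequality bounds
their average number from below. This Moore-type argument shows that `S` has few more edges than
vertices.

Hence `S` is nearly determined by a depth-first search which by default advances from each vertex
it has just discovered and otherwise retreats: apart from the endpoints of the two halves of the
hike, exceptions to this rule only occur at cycles. Once `S` is known, each half of the hike is
cut into pieces of length `r`, and each piece is determined by its endpoints up to three choices.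
-/

section NonBacktracking

variable {V : Type*} {G : SimpleGraph V}

/-- No step of the vertex sequence `l` undoes the previous one. -/
def NonBacktracking (l : List V) : Prop :=
  ∀ (i : ℕ) (h : i + 2 < l.length), l[i] ≠ l[i + 2]

theorem NonBacktracking.left_of_append {l₁ l₂ : List V} (h : NonBacktracking (l₁ ++ l₂)) :
    NonBacktracking l₁ := by
  intro i hi
  have := h i (by simp; omega)
  grind

theorem NonBacktracking.right_of_append {l₁ l₂ : List V} (h : NonBacktracking (l₁ ++ l₂)) :
    NonBacktracking l₂ := by
  intro i hi
  have := h (l₁.length + i) (by simp; omega)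
  grind

theorem nonBacktracking_cons_cons {x y z : V} {l : List V} (hxz : x ≠ z)
    (h : NonBacktracking (y :: z :: l)) : NonBacktracking (x :: y :: z :: l)
  | 0, _ => hxz
  | i + 1, hi => h i (by simpa using hi)

theorem isChain_ne_edges_of_nonBacktracking :
    ∀ {u v : V} (p : G.Walk u v), NonBacktracking p.support → p.edges.IsChain (· ≠ ·)
  | _, _, .nil, _ => by simp
  | _, _, .cons _ .nil, _ => by simp
  | u, _, .cons (v := x) hux (.cons (v := y) hxy p), hp => by
    have hne : u ≠ y := by
      have := hp 0 (by simp)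
      cases p <;> simpa using this
    have htail := isChain_ne_edges_of_nonBacktracking (.cons hxy p)
      (hp.right_of_append (l₁ := [u]))
    simp only [SimpleGraph.Walk.edges_cons] at htail ⊢
    refine htail.cons_cons fun he => ?_
    rcases Sym2.eq_iff.1 he with ⟨h, -⟩ | ⟨h, -⟩
    exacts [hux.ne h, hne h]

/-- `l` lists the vertices of a non-backtracking walk of length `ℓ` from `u` to `v` in `G`. Lists
are used rather than `G.Walk u v` because the walks below are cut, glued and moved between
graphs. -/
structure IsNBWalk (G : SimpleGraph V) (u v : V) (ℓ : ℕ) (l : List V) : Prop where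
  isChain : l.IsChain G.Adj
  nonBacktracking : NonBacktracking l
  length_eq : l.length = ℓ + 1
  head?_eq : l.head? = some u
  getLast?_eq : l.getLast? = some v

namespace IsNBWalk

variable {u v : V} {ℓ : ℕ} {l : List V}

theorem ne_nil (h : IsNBWalk G u v ℓ l) : l ≠ [] := by
  rintro rfl
  simpa using h.length_eq

theorem mono {H : SimpleGraph V} (hGH : G ≤ H) (h : IsNBWalk G u v ℓ l) : IsNBWalk H u v ℓ l :=
  { h with isChain := h.isChain.imp fun _ _ hab => hGH hab }

theorem cons_cons {x y z w : V} (hxy : G.Adj x y) (hxz : x ≠ z)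
    (h : IsNBWalk G y w ℓ (y :: z :: l)) : IsNBWalk G x w (ℓ + 1) (x :: y :: z :: l) where
  isChain := h.isChain.cons_cons hxy
  nonBacktracking := nonBacktracking_cons_cons hxz h.nonBacktracking
  length_eq := by simpa using h.length_eq
  head?_eq := rfl
  getLast?_eq := by simpa using h.getLast?_eq

theorem exists_walk (h : IsNBWalk G u v ℓ l) : ∃ p : G.Walk u v, p.support = l := by
  have hu := h.head?_eq
  have hv := h.getLast?_eq
  rw [List.head?_eq_some_head h.ne_nil, Option.some.injEq] at hu
  rw [List.getLast?_eq_some_getLast h.ne_nil, Option.some.injEq] at hv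
  exact ⟨(SimpleGraph.Walk.ofSupport l h.ne_nil h.isChain).copy hu hv, by simp⟩

theorem take (h : IsNBWalk G u v ℓ l) {r : ℕ} (hr : r ≤ ℓ) :
    IsNBWalk G u (l.getD r u) r (l.take (r + 1)) := by
  have hlen := h.length_eq
  refine ⟨h.isChain.take _, ?_, by simp; omega, by rw [List.head?_take]; simpa using h.head?_eq, ?_⟩
  · exact NonBacktracking.left_of_append (l₂ := l.drop (r + 1))
      (by rw [List.take_append_drop]; exact h.nonBacktracking)
  · simp [List.getLast?_eq_getElem?, show min (r + 1) l.length = r + 1 by omega,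
      List.getElem?_eq_getElem (show r < l.length by omega)]

theorem drop (h : IsNBWalk G u v ℓ l) {r : ℕ} (hr : r ≤ ℓ) :
    IsNBWalk G (l.getD r u) v (ℓ - r) (l.drop r) := by
  have hlen := h.length_eq
  refine ⟨h.isChain.drop _, ?_, by simp; omega, ?_, ?_⟩
  · exact NonBacktracking.right_of_append (l₁ := l.take r)
      (by rw [List.take_append_drop]; exact h.nonBacktracking)
  · simp [List.getElem?_eq_getElem (show r < l.length by omega)]
  · rw [List.getLast?_drop, if_neg (by omega), h.getLast?_eq]

theorem induce {s : Set V} {u v : s} {l : List s}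
    (h : IsNBWalk G u v ℓ (l.map Subtype.val)) : IsNBWalk (G.induce s) u v ℓ l where
  isChain := by
    have := h.isChain
    rwa [List.isChain_map] at this
  nonBacktracking i hi hii := h.nonBacktracking i (by simpa using hi) (by simp [hii])
  length_eq := by simpa using h.length_eq
  head?_eq := by
    have := h.head?_eq
    rw [List.head?_map] at this
    exact Option.map_injective Subtype.val_injective this
  getLast?_eq := by
    have := h.getLast?_eq
    rw [List.getLast?_map] at this
    exact Option.map_injective Subtype.val_injective this

theorem eq_of_isAcyclic (hG : G.IsAcyclic) {ℓ' : ℕ} {l' : List V} (h : IsNBWalk G u v ℓ l)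
    (h' : IsNBWalk G u v ℓ' l') : l = l' := by
  obtain ⟨p, rfl⟩ := h.exists_walk
  obtain ⟨p', rfl⟩ := h'.exists_walk
  have hp := (hG.isPath_iff_isChain p).2 (isChain_ne_edges_of_nonBacktracking p h.nonBacktracking)
  have hp' :=
    (hG.isPath_iff_isChain p').2 (isChain_ne_edges_of_nonBacktracking p' h'.nonBacktracking)
  have := hG.subsingleton_path u v
  have hpp' : p = p' :=
    congrArg Subtype.val (Subsingleton.elim (α := G.Path u v) ⟨p, hp⟩ ⟨p', hp'⟩)
  rw [hpp']

end IsNBWalk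

end NonBacktracking

section TreePlusEdge

variable {V : Type*} {T : SimpleGraph V} {a b : V}

/-- The vertex sequence `l` runs inside `T` up to a first step from `a` to `b`. -/
def CrossesFirst (T : SimpleGraph V) (a b : V) (l : List V) : Prop :=
  ∃ l₁ l₂, l = l₁ ++ l₂ ∧ l₁.IsChain T.Adj ∧ l₁.getLast? = some a ∧ l₂.head? = some b

theorem CrossesFirst.cons {x y : V} {l : List V} (hxy : T.Adj x y)
    (h : CrossesFirst T a b (y :: l)) : CrossesFirst T a b (x :: y :: l) := by
  obtain ⟨_ | ⟨z, l₁⟩, l₂, he, hchain, hlast, hhead⟩ := h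
  · simp at hlast
  · obtain ⟨rfl, rfl⟩ := List.cons.inj he
    exact ⟨x :: y :: l₁, l₂, rfl, hchain.cons_cons hxy, by simpa using hlast, hhead⟩

theorem isChain_or_crossesFirst_of_isChain_sup_edge :
    ∀ {l : List V}, l.IsChain (T ⊔ SimpleGraph.edge a b).Adj →
      l.IsChain T.Adj ∨ CrossesFirst T a b l ∨ CrossesFirst T b a l
  | [], _ => by simp
  | [x], _ => by simp
  | x :: y :: l, h => by
    obtain ⟨hxy, hl⟩ := List.isChain_cons_cons.1 h
    rw [SimpleGraph.sup_adj, SimpleGraph.edge_adj] at hxy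
    rcases hxy with hxy | ⟨⟨rfl, rfl⟩ | ⟨rfl, rfl⟩, -⟩
    · rcases isChain_or_crossesFirst_of_isChain_sup_edge hl with h | h | h
      · exact .inl (h.cons_cons hxy)
      · exact .inr (.inl (h.cons hxy))
      · exact .inr (.inr (h.cons hxy))
    · exact .inr (.inl ⟨[x], y :: l, rfl, by simp, by simp, by simp⟩)
    · exact .inr (.inr ⟨[x], y :: l, rfl, by simp, by simp, by simp⟩)

/- Coming back through the extra edge would require a non-backtracking walk in `T` from `b` to `b`,
which is trivial, so the walk would have to backtrack along that edge. -/
theorem isChain_or_crossesFirst_of_nonBacktracking_append (hT : T.IsAcyclic) {l₁ l₂ : List V}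
    (hchain : l₂.IsChain (T ⊔ SimpleGraph.edge a b).Adj) (hnb : NonBacktracking (l₁ ++ l₂))
    (hlast : l₁.getLast? = some a) (hhead : l₂.head? = some b) :
    l₂.IsChain T.Adj ∨ CrossesFirst T a b l₂ := by
  rcases isChain_or_crossesFirst_of_isChain_sup_edge hchain with h | h |
    ⟨m₁, m₂, rfl, hm₁, hm₁last, hm₂head⟩
  · exact .inl h
  · exact .inr h
  · have hm₁ne : m₁ ≠ [] := by rintro rfl; simp at hm₁last
    have hclosed : IsNBWalk T b b (m₁.length - 1) m₁ :=
      ⟨hm₁, hnb.right_of_append.left_of_append,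
        by have := List.length_pos_of_ne_nil hm₁ne; omega,
        by rwa [List.head?_append_of_ne_nil _ hm₁ne] at hhead, hm₁last⟩
    have htrivial : IsNBWalk T b b 0 [b] :=
      ⟨by simp, fun i hi => by simp at hi, rfl, rfl, rfl⟩
    obtain rfl := hclosed.eq_of_isAcyclic hT htrivial
    obtain ⟨l₃, rfl⟩ := List.getLast?_eq_some_iff.1 hlast
    obtain ⟨m₃, rfl⟩ := List.head?_eq_some_iff.1 hm₂head
    exact absurd (hnb l₃.length (by simp)) (by simp)

variable {u w : V} {ℓ : ℕ} {l : List V}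

theorem IsNBWalk.exists_eq_append_of_crossesFirst (hT : T.IsAcyclic)
    (h : IsNBWalk (T ⊔ SimpleGraph.edge a b) u w ℓ l) (hcross : CrossesFirst T a b l) :
    ∃ i j l₁ l₂, l = l₁ ++ l₂ ∧ ℓ = i + j + 1 ∧ IsNBWalk T u a i l₁ ∧
      IsNBWalk (T ⊔ SimpleGraph.edge a b) b w j l₂ ∧
      (IsNBWalk T b w j l₂ ∨ CrossesFirst T a b l₂) := by
  obtain ⟨l₁, l₂, rfl, hl₁, hlast, hhead⟩ := hcross
  have hl₁ne : l₁ ≠ [] := by rintro rfl; simp at hlast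
  have hl₂ne : l₂ ≠ [] := by rintro rfl; simp at hhead
  have hpos₁ := List.length_pos_of_ne_nil hl₁ne
  have hpos₂ := List.length_pos_of_ne_nil hl₂ne
  have hlen := h.length_eq
  rw [List.length_append] at hlen
  have hhead₁ := h.head?_eq
  rw [List.head?_append_of_ne_nil _ hl₁ne] at hhead₁
  have hlast₂ := h.getLast?_eq
  rw [List.getLast?_append_of_ne_nil _ hl₂ne] at hlast₂
  have hl₂ : IsNBWalk (T ⊔ SimpleGraph.edge a b) b w (l₂.length - 1) l₂ :=
    ⟨h.isChain.right_of_append, h.nonBacktracking.right_of_append, by omega, hhead, hlast₂⟩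
  refine ⟨l₁.length - 1, l₂.length - 1, l₁, l₂, rfl, by omega,
    ⟨hl₁, h.nonBacktracking.left_of_append, by omega, hhead₁, hlast⟩, hl₂, ?_⟩
  exact (isChain_or_crossesFirst_of_nonBacktracking_append hT hl₂.isChain h.nonBacktracking hlast
    hhead).imp_left fun hchain => { hl₂ with isChain := hchain }

theorem IsNBWalk.length_lt_of_crossesFirst (hT : T.IsAcyclic) {i : ℕ} {t : List V}
    (ht : IsNBWalk T b w i t) (h : IsNBWalk (T ⊔ SimpleGraph.edge a b) u w ℓ l)
    (hcross : CrossesFirst T a b l) : i < ℓ := by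
  induction ℓ using Nat.strong_induction_on generalizing u l with
  | _ ℓ ih =>
    obtain ⟨i', j, l₁, l₂, rfl, rfl, -, hl₂, htree | hcross₂⟩ :=
      h.exists_eq_append_of_crossesFirst hT hcross
    · have hlen := ht.length_eq
      rw [ht.eq_of_isAcyclic hT htree, htree.length_eq] at hlen
      omega
    · have := ih j (by omega) hl₂ hcross₂
      omega

theorem IsNBWalk.eq_of_crossesFirst (hT : T.IsAcyclic) {l' : List V}
    (h : IsNBWalk (T ⊔ SimpleGraph.edge a b) u w ℓ l) (hcross : CrossesFirst T a b l)
    (h' : IsNBWalk (T ⊔ SimpleGraph.edge a b) u w ℓ l') (hcross' : CrossesFirst T a b l') :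
    l = l' := by
  induction ℓ using Nat.strong_induction_on generalizing u l l' with
  | _ ℓ ih =>
    obtain ⟨i, j, l₁, l₂, rfl, rfl, hl₁, hl₂, hrest⟩ := h.exists_eq_append_of_crossesFirst hT hcross
    obtain ⟨i', j', m₁, m₂, rfl, hij, hm₁, hm₂, hrest'⟩ :=
      h'.exists_eq_append_of_crossesFirst hT hcross'
    obtain rfl := hl₁.eq_of_isAcyclic hT hm₁
    obtain rfl : i = i' := by have := hl₁.length_eq; have := hm₁.length_eq; omega
    obtain rfl : j = j' := by omega
    congr 1
    rcases hrest with htree | hcross₂ <;> rcases hrest' with htree' | hcross₂'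
    · exact htree.eq_of_isAcyclic hT htree'
    · exact absurd (htree.length_lt_of_crossesFirst hT hm₂ hcross₂') (lt_irrefl j)
    · exact absurd (htree'.length_lt_of_crossesFirst hT hl₂ hcross₂) (lt_irrefl j)
    · exact ih j (by omega) hl₂ hcross₂ hm₂ hcross₂'

/- The direction in which the extra edge is crossed determines a non-backtracking walk of given
length: never, always from `a` to `b`, or always from `b` to `a`. -/
theorem card_isNBWalk_sup_edge_le_three (hT : T.IsAcyclic) {Q : Finset (List V)}
    (hQ : ∀ l ∈ Q, IsNBWalk (T ⊔ SimpleGraph.edge a b) u w ℓ l) : Q.card ≤ 3 := by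
  have hcover : Q ⊆ {l ∈ Q | l.IsChain T.Adj} ∪
      ({l ∈ Q | CrossesFirst T a b l} ∪ {l ∈ Q | CrossesFirst T b a l}) := by
    intro l hl
    have := isChain_or_crossesFirst_of_isChain_sup_edge (hQ l hl).isChain
    simp only [Finset.mem_union, Finset.mem_filter]
    tauto
  have hnever : {l ∈ Q | l.IsChain T.Adj}.card ≤ 1 := by
    simp only [Finset.card_le_one, Finset.mem_filter]
    rintro l ⟨hl, hchain⟩ l' ⟨hl', hchain'⟩
    exact IsNBWalk.eq_of_isAcyclic hT { hQ l hl with isChain := hchain }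
      { hQ l' hl' with isChain := hchain' }
  have hforward : {l ∈ Q | CrossesFirst T a b l}.card ≤ 1 := by
    simp only [Finset.card_le_one, Finset.mem_filter]
    rintro l ⟨hl, hcross⟩ l' ⟨hl', hcross'⟩
    exact (hQ l hl).eq_of_crossesFirst hT hcross (hQ l' hl') hcross'
  have hbackward : {l ∈ Q | CrossesFirst T b a l}.card ≤ 1 := by
    rw [SimpleGraph.edge_comm] at hQ
    simp only [Finset.card_le_one, Finset.mem_filter]
    rintro l ⟨hl, hcross⟩ l' ⟨hl', hcross'⟩
    exact (hQ l hl).eq_of_crossesFirst hT hcross (hQ l' hl') hcross'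
  calc Q.card ≤ _ := Finset.card_le_card hcover
    _ ≤ _ := Finset.card_union_le _ _
    _ ≤ 1 + (1 + 1) := add_le_add hnever ((Finset.card_union_le _ _).trans (by gcongr))

end TreePlusEdge

section Ball

variable {V : Type*} {G : SimpleGraph V} {r : ℕ}

theorem mem_gBall_self (G : SimpleGraph V) (u : V) (r : ℕ) : u ∈ gBall G u r :=
  ⟨.refl u, by simp⟩

theorem mem_gBall_of_mem_support {u v x : V} (p : G.Walk u v) (hp : p.length ≤ r)
    (hx : x ∈ p.support) : x ∈ gBall G u r :=
  ⟨(p.takeUntil x hx).reachable,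
    (SimpleGraph.dist_le _).trans ((p.length_takeUntil_le_length hx).trans hp)⟩

theorem connected_induce_gBall (G : SimpleGraph V) (u : V) (r : ℕ) :
    (G.induce (gBall G u r)).Connected := by
  rw [SimpleGraph.connected_iff_exists_forall_reachable]
  refine ⟨⟨u, mem_gBall_self G u r⟩, fun ⟨v, hreach, hdist⟩ => ?_⟩
  obtain ⟨p, hp⟩ := hreach.exists_walk_length_eq_dist
  exact ⟨p.induce _ fun x hx => mem_gBall_of_mem_support p (hp.trans_le hdist) hx⟩

theorem exists_isAcyclic_le_sup_edge [Fintype V] (hG : G.Connected)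
    (hcard : G.edgeFinset.card ≤ Fintype.card V) :
    ∃ (T : SimpleGraph V) (a b : V), T.IsAcyclic ∧ G ≤ T ⊔ SimpleGraph.edge a b := by
  obtain ⟨T, hTG, hT⟩ := hG.exists_isTree_le
  have hsub : T.edgeFinset ⊆ G.edgeFinset := SimpleGraph.edgeFinset_mono hTG
  have hone : (G.edgeFinset \ T.edgeFinset).card ≤ 1 := by
    have := hT.card_edgeFinset
    rw [Finset.card_sdiff_of_subset hsub]
    omega
  have : Nonempty (Sym2 V) := hG.nonempty.map fun v => s(v, v)
  obtain ⟨⟨a, b⟩, hab⟩ := Finset.card_le_one_iff_subset_singleton.1 hone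
  refine ⟨T, a, b, hT.isAcyclic, fun x y hxy => ?_⟩
  rw [SimpleGraph.sup_adj, SimpleGraph.edge_adj, or_iff_not_imp_left]
  intro hTxy
  have hmem : s(x, y) ∈ ({s(a, b)} : Finset (Sym2 V)) := hab (by simp [hxy, hTxy])
  exact ⟨Sym2.eq_iff.1 (Finset.mem_singleton.1 hmem), hxy.ne⟩

theorem BicycleFree.exists_isAcyclic_le_sup_edge [Finite V] (hG : BicycleFree G r) (u : V) :
    ∃ (T : SimpleGraph (gBall G u r)) (a b : gBall G u r),
      T.IsAcyclic ∧ G.induce (gBall G u r) ≤ T ⊔ SimpleGraph.edge a b := by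
  have := Fintype.ofFinite V
  refine _root_.exists_isAcyclic_le_sup_edge (connected_induce_gBall G u r) ?_
  calc (G.induce (gBall G u r)).edgeFinset.card
      ≤ (G.edgeSet ∩ {e : Sym2 V | ∀ x ∈ e, x ∈ gBall G u r}).ncard := by
        rw [Set.ncard_eq_toFinset_card']
        refine Finset.card_le_card_of_injOn (Sym2.map Subtype.val) ?_
          (Sym2.map.injective Subtype.val_injective).injOn
        rintro ⟨x, y⟩ hxy
        have hadj : G.Adj x y := by simpa using hxy
        simp [hadj]
    _ ≤ (gBall G u r).ncard := hG u
    _ = Fintype.card (gBall G u r) := by rw [← Nat.card_coe_set_eq, Nat.card_eq_fintype_card]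

theorem BicycleFree.card_isNBWalk_le_three [Finite V] (hG : BicycleFree G r) {u w : V} {ℓ : ℕ}
    (hℓ : ℓ ≤ r) {Q : Finset (List V)} (hQ : ∀ l ∈ Q, IsNBWalk G u w ℓ l) : Q.card ≤ 3 := by
  obtain rfl | ⟨l₀, hl₀⟩ := Q.eq_empty_or_nonempty
  · simp
  have hball : ∀ l ∈ Q, ∀ x ∈ l, x ∈ gBall G u r := by
    intro l hl x hx
    obtain ⟨p, rfl⟩ := (hQ l hl).exists_walk
    have := (hQ _ hl).length_eq
    rw [SimpleGraph.Walk.length_support] at this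
    exact mem_gBall_of_mem_support p (by omega) hx
  have hw : w ∈ gBall G u r := hball l₀ hl₀ w (List.mem_of_getLast? (hQ l₀ hl₀).getLast?_eq)
  obtain ⟨T, a, b, hT, hle⟩ := hG.exists_isAcyclic_le_sup_edge u
  have hinj : Function.Injective (List.map (Subtype.val : gBall G u r → V)) :=
    List.map_injective_iff.2 Subtype.val_injective
  have hcover : Q ⊆ (Q.preimage _ hinj.injOn).image (List.map Subtype.val) := by
    intro l hl
    have := hball l hl
    lift l to List (gBall G u r) using this
    exact Finset.mem_image_of_mem _ (Finset.mem_preimage.2 hl)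
  calc Q.card ≤ _ := Finset.card_le_card hcover
    _ ≤ _ := Finset.card_image_le
    _ ≤ 3 := card_isNBWalk_sup_edge_le_three (u := ⟨u, mem_gBall_self G u r⟩) (w := ⟨w, hw⟩) hT
        fun l hl => (IsNBWalk.induce (hQ _ (Finset.mem_preimage.1 hl))).mono hle

end Ball

section EdgeSets

variable {V : Type*} [Fintype V] {G : SimpleGraph V} {S K : Finset (Sym2 V)} {x y : V}

/-- The vertices joined to `y` by an edge of the finite edge set `S`. -/
def edgeNeighbors (S : Finset (Sym2 V)) (y : V) : Finset V := {z | s(y, z) ∈ S}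

/-- The vertices covered by the finite edge set `S`. -/
def edgeVertices (S : Finset (Sym2 V)) : Finset V := {x | ∃ y, s(x, y) ∈ S}

theorem mem_edgeNeighbors : x ∈ edgeNeighbors S y ↔ s(y, x) ∈ S := by simp [edgeNeighbors]

theorem mem_edgeNeighbors_comm : x ∈ edgeNeighbors S y ↔ y ∈ edgeNeighbors S x := by
  rw [mem_edgeNeighbors, mem_edgeNeighbors, Sym2.eq_swap]

theorem mem_edgeVertices : x ∈ edgeVertices S ↔ ∃ y, s(x, y) ∈ S := by simp [edgeVertices]

theorem left_mem_edgeVertices (h : s(x, y) ∈ S) : x ∈ edgeVertices S := mem_edgeVertices.2 ⟨y, h⟩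

theorem right_mem_edgeVertices (h : s(x, y) ∈ S) : y ∈ edgeVertices S :=
  left_mem_edgeVertices (Sym2.eq_swap ▸ h)

theorem edgeVertices_mono (h : K ⊆ S) : edgeVertices K ⊆ edgeVertices S := fun _ hx =>
  have ⟨_, hy⟩ := mem_edgeVertices.1 hx
  left_mem_edgeVertices (h hy)

theorem sum_card_edgeNeighbors (hS : ∀ e ∈ S, ¬e.IsDiag) :
    ∑ y, (edgeNeighbors S y).card = 2 * S.card := by
  have hsum := (SimpleGraph.fromEdgeSet (S : Set (Sym2 V))).sum_degrees_eq_twice_card_edges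
  convert hsum using 3
  · rw [← SimpleGraph.card_neighborFinset_eq_degree]
    congr 1
    ext z
    simp only [mem_edgeNeighbors, SimpleGraph.mem_neighborFinset, SimpleGraph.fromEdgeSet_adj,
      Finset.mem_coe]
    exact ⟨fun h => ⟨h, hS _ h⟩, And.left⟩
  · ext e
    simp only [SimpleGraph.mem_edgeFinset, SimpleGraph.edgeSet_fromEdgeSet]
    exact ⟨fun h => ⟨h, hS e h⟩, And.left⟩

theorem exists_subset_two_le_card_edgeNeighbors (S : Finset (Sym2 V)) :
    ∃ S' ⊆ S, (∀ x ∈ edgeVertices S', 2 ≤ (edgeNeighbors S' x).card) ∧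
      S.card + (edgeVertices S').card ≤ S'.card + (edgeVertices S).card := by
  induction S using Finset.strongInduction with
  | H S ih =>
    by_cases hdeg : ∀ x ∈ edgeVertices S, 2 ≤ (edgeNeighbors S x).card
    · exact ⟨S, subset_rfl, hdeg, le_rfl⟩
    push Not at hdeg
    obtain ⟨x, hx, hleaf⟩ := hdeg
    obtain ⟨y, hxy⟩ := mem_edgeVertices.1 hx
    obtain ⟨S', hS', hdeg', hcard'⟩ := ih _ (Finset.erase_ssubset hxy)
    have hvertices : edgeVertices (S.erase s(x, y)) ⊆ (edgeVertices S).erase x := by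
      intro z hz
      obtain ⟨w, hw⟩ := mem_edgeVertices.1 hz
      rw [Finset.mem_erase] at hw ⊢
      refine ⟨?_, left_mem_edgeVertices hw.2⟩
      rintro rfl
      exact hw.1 (congrArg _ (Finset.card_le_one.1 (by omega) w (mem_edgeNeighbors.2 hw.2) y
        (mem_edgeNeighbors.2 hxy)))
    refine ⟨S', hS'.trans (Finset.erase_subset _ _), hdeg', ?_⟩
    have hcard := Finset.card_le_card hvertices
    rw [Finset.card_erase_of_mem hx] at hcard
    rw [Finset.card_erase_of_mem hxy] at hcard'
    have := Finset.card_pos.2 ⟨x, hx⟩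
    omega

end EdgeSets

section LogInequalities

variable {ι : Type*} {s : Finset ι} {a : ι → ℝ}

theorem log_card_add_average_log_le_log_sum (hs : s.Nonempty) (ha : ∀ i ∈ s, 0 < a i) :
    Real.log s.card + (s.card : ℝ)⁻¹ * ∑ i ∈ s, Real.log (a i) ≤ Real.log (∑ i ∈ s, a i) := by
  have hcard : (0 : ℝ) < s.card := by exact_mod_cast hs.card_pos
  have hjensen := strictConcaveOn_log_Ioi.concaveOn.le_map_sum (t := s)
    (w := fun _ => (s.card : ℝ)⁻¹) (p := a) (fun _ _ => by positivity)
    (by simp [hcard.ne']) ha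
  simp only [smul_eq_mul] at hjensen
  rw [← Finset.mul_sum, ← Finset.mul_sum, Real.log_mul (by positivity)
    (Finset.sum_pos ha hs).ne', Real.log_inv] at hjensen
  linarith

theorem card_mul_log_add_sum_log_le_sum_log_sum_erase (hs : 2 ≤ s.card)
    (ha : ∀ i ∈ s, 0 < a i) :
    s.card * Real.log (s.card - 1) + ∑ i ∈ s, Real.log (a i) ≤
      ∑ j ∈ s, Real.log (∑ i ∈ s.erase j, a i) := by
  have hs' : (2 : ℝ) ≤ s.card := by exact_mod_cast hs
  have hterm : ∀ j ∈ s, Real.log (s.card - 1) +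
      (s.card - 1 : ℝ)⁻¹ * (∑ i ∈ s, Real.log (a i) - Real.log (a j)) ≤
        Real.log (∑ i ∈ s.erase j, a i) := by
    intro j hj
    have hcard : (s.erase j).card = s.card - 1 := Finset.card_erase_of_mem hj
    have h := log_card_add_average_log_le_log_sum (s := s.erase j)
      (Finset.card_pos.1 (by omega)) fun i hi => ha i (Finset.mem_of_mem_erase hi)
    rwa [hcard, Nat.cast_sub (by omega), Nat.cast_one, Finset.sum_erase_eq_sub hj] at h
  refine le_trans (le_of_eq ?_) (Finset.sum_le_sum hterm)
  rw [Finset.sum_add_distrib, ← Finset.mul_sum, Finset.sum_sub_distrib]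
  simp only [Finset.sum_const, nsmul_eq_mul]
  have : (s.card - 1 : ℝ) ≠ 0 := by linarith
  field_simp

theorem two_mul_sub_four_le_mul_log_sub_one {t : ℝ} (ht : 2 ≤ t) :
    2 * t - 4 ≤ t * Real.log (t - 1) := by
  have h := Real.le_log_one_add_of_nonneg (x := t - 2) (by linarith)
  rw [sub_add_cancel, show 1 + (t - 2) = t - 1 by ring, div_le_iff₀ (by linarith)] at h
  linarith

end LogInequalities

section Moore

variable {V : Type*} [Fintype V] {G : SimpleGraph V} {S : Finset (Sym2 V)} {x y : V}

/-- The non-backtracking walks in `S` which start with the step from `x` to `y` and take `ℓ`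
further steps. -/
def nbExtensions (S : Finset (Sym2 V)) : ℕ → V → V → Finset (List V)
  | 0, x, y => {[x, y]}
  | ℓ + 1, x, y =>
    ((edgeNeighbors S y).erase x).biUnion fun z => (nbExtensions S ℓ y z).image (List.cons x)

theorem exists_eq_cons_cons_of_mem_nbExtensions {ℓ : ℕ} {l : List V}
    (hl : l ∈ nbExtensions S ℓ x y) : ∃ l', l = x :: y :: l' := by
  induction ℓ generalizing x y l with
  | zero => exact ⟨[], Finset.mem_singleton.1 hl⟩
  | succ ℓ ih =>
    simp only [nbExtensions, Finset.mem_biUnion, Finset.mem_image] at hl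
    obtain ⟨z, -, l', hl', rfl⟩ := hl
    obtain ⟨l'', rfl⟩ := ih hl'
    exact ⟨z :: l'', rfl⟩

theorem exists_isNBWalk_of_mem_nbExtensions (hS : (S : Set (Sym2 V)) ⊆ G.edgeSet)
    {ℓ : ℕ} {l : List V} (hxy : s(x, y) ∈ S) (hl : l ∈ nbExtensions S ℓ x y) :
    ∃ w ∈ edgeVertices S, IsNBWalk G x w (ℓ + 1) l := by
  induction ℓ generalizing x y l with
  | zero =>
    obtain rfl := Finset.mem_singleton.1 hl
    exact ⟨y, right_mem_edgeVertices hxy,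
      ⟨by simpa using hS hxy, fun i hi => by simp at hi, rfl, rfl, rfl⟩⟩
  | succ ℓ ih =>
    simp only [nbExtensions, Finset.mem_biUnion, Finset.mem_image, Finset.mem_erase,
      mem_edgeNeighbors] at hl
    obtain ⟨z, ⟨hzx, hyz⟩, l', hl', rfl⟩ := hl
    obtain ⟨w, hw, hwalk⟩ := ih hyz hl'
    obtain ⟨l'', rfl⟩ := exists_eq_cons_cons_of_mem_nbExtensions hl'
    exact ⟨w, hw, hwalk.cons_cons (hS hxy) hzx.symm⟩

theorem card_nbExtensions_succ (ℓ : ℕ) (x y : V) :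
    (nbExtensions S (ℓ + 1) x y).card =
      ∑ z ∈ (edgeNeighbors S y).erase x, (nbExtensions S ℓ y z).card := by
  rw [nbExtensions, Finset.card_biUnion]
  · exact Finset.sum_congr rfl fun z _ => Finset.card_image_of_injective _ List.cons_injective
  · intro z _ z' _ hne
    rw [Function.onFun, Finset.disjoint_left]
    intro l hl hl'
    obtain ⟨m, hm, rfl⟩ := Finset.mem_image.1 hl
    obtain ⟨m', hm', he⟩ := Finset.mem_image.1 hl'
    obtain ⟨t, rfl⟩ := exists_eq_cons_cons_of_mem_nbExtensions hm
    obtain ⟨t', rfl⟩ := exists_eq_cons_cons_of_mem_nbExtensions hm'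
    simp only [List.cons.injEq, true_and] at he
    exact hne he.1.symm

theorem card_nbExtensions_pos (hdeg : ∀ x ∈ edgeVertices S, 2 ≤ (edgeNeighbors S x).card)
    (ℓ : ℕ) (hxy : s(x, y) ∈ S) : 0 < (nbExtensions S ℓ x y).card := by
  induction ℓ generalizing x y with
  | zero => simp [nbExtensions]
  | succ ℓ ih =>
    have hx : x ∈ edgeNeighbors S y := mem_edgeNeighbors_comm.1 (mem_edgeNeighbors.2 hxy)
    have hy := hdeg y (right_mem_edgeVertices hxy)
    rw [card_nbExtensions_succ]
    refine Finset.sum_pos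
      (fun z hz => ih (mem_edgeNeighbors.1 (Finset.mem_of_mem_erase hz))) (Finset.card_pos.1 ?_)
    rw [Finset.card_erase_of_mem hx]
    omega

/- Jensen's inequality at each vertex bounds the average number of non-backtracking walks below
without assuming regularity. -/
theorem mul_sum_card_mul_log_le_sum_log_card_nbExtensions
    (hdeg : ∀ x ∈ edgeVertices S, 2 ≤ (edgeNeighbors S x).card) (ℓ : ℕ) :
    ℓ * ∑ y, (edgeNeighbors S y).card * Real.log ((edgeNeighbors S y).card - 1) ≤
      ∑ y, ∑ x ∈ edgeNeighbors S y, Real.log (nbExtensions S ℓ x y).card := by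
  induction ℓ with
  | zero => simp [nbExtensions]
  | succ ℓ ih =>
    have hreverse : ∑ y, ∑ x ∈ edgeNeighbors S y, Real.log (nbExtensions S ℓ x y).card =
        ∑ y, ∑ z ∈ edgeNeighbors S y, Real.log (nbExtensions S ℓ y z).card :=
      Finset.sum_comm' fun x y => by simp [mem_edgeNeighbors_comm (x := x)]
    have hvertex : ∀ y, (edgeNeighbors S y).card * Real.log ((edgeNeighbors S y).card - 1) +
        ∑ z ∈ edgeNeighbors S y, Real.log (nbExtensions S ℓ y z).card ≤
          ∑ x ∈ edgeNeighbors S y, Real.log (nbExtensions S (ℓ + 1) x y).card := by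
      intro y
      obtain hempty | ⟨x, hx⟩ := (edgeNeighbors S y).eq_empty_or_nonempty
      · simp [hempty]
      simp only [card_nbExtensions_succ, Nat.cast_sum]
      exact card_mul_log_add_sum_log_le_sum_log_sum_erase
        (hdeg y (left_mem_edgeVertices (mem_edgeNeighbors.1 hx)))
        fun z hz => by exact_mod_cast card_nbExtensions_pos hdeg ℓ (mem_edgeNeighbors.1 hz)
    have hsum := Finset.sum_le_sum fun y (_ : y ∈ Finset.univ) => hvertex y
    rw [Finset.sum_add_distrib] at hsum
    push_cast
    linarith

theorem BicycleFree.card_nbExtensions_le {r : ℕ} (hG : BicycleFree G r)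
    (hS : (S : Set (Sym2 V)) ⊆ G.edgeSet) {ℓ : ℕ} (hℓ : ℓ + 1 ≤ r) (hxy : s(x, y) ∈ S) :
    (nbExtensions S ℓ x y).card ≤ (edgeVertices S).card * 3 := by
  have hcover : nbExtensions S ℓ x y ⊆ (edgeVertices S).biUnion fun w =>
      {l ∈ nbExtensions S ℓ x y | IsNBWalk G x w (ℓ + 1) l} := by
    intro l hl
    obtain ⟨w, hw, hwalk⟩ := exists_isNBWalk_of_mem_nbExtensions hS hxy hl
    exact Finset.mem_biUnion.2 ⟨w, hw, Finset.mem_filter.2 ⟨hl, hwalk⟩⟩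
  exact (Finset.card_le_card hcover).trans <| Finset.card_biUnion_le_card_mul _ _ _ fun w _ =>
    hG.card_isNBWalk_le_three hℓ fun l hl => (Finset.mem_filter.1 hl).2

theorem four_mul_card_sub_le_sum_card_mul_log (hS : ∀ e ∈ S, ¬e.IsDiag)
    (hdeg : ∀ x ∈ edgeVertices S, 2 ≤ (edgeNeighbors S x).card) :
    4 * (S.card : ℝ) - 4 * (edgeVertices S).card ≤
      ∑ y, (edgeNeighbors S y).card * Real.log ((edgeNeighbors S y).card - 1) := by
  have hvertex : ∀ y, 2 * ((edgeNeighbors S y).card : ℝ) - (if y ∈ edgeVertices S then 4 else 0) ≤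
      (edgeNeighbors S y).card * Real.log ((edgeNeighbors S y).card - 1) := by
    intro y
    split_ifs with hy
    · exact two_mul_sub_four_le_mul_log_sub_one (by exact_mod_cast hdeg y hy)
    · have hempty : edgeNeighbors S y = ∅ := Finset.eq_empty_of_forall_notMem fun z hz =>
        hy (left_mem_edgeVertices (mem_edgeNeighbors.1 hz))
      simp [hempty]
  have hsum := Finset.sum_le_sum fun y (_ : y ∈ Finset.univ) => hvertex y
  have hdegrees : ∑ y, ((edgeNeighbors S y).card : ℝ) = 2 * S.card := by
    exact_mod_cast sum_card_edgeNeighbors hS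
  rw [Finset.sum_sub_distrib, ← Finset.mul_sum, hdegrees] at hsum
  simp only [Finset.sum_ite_mem, Finset.univ_inter, Finset.sum_const, nsmul_eq_mul] at hsum
  linarith

theorem BicycleFree.card_sub_card_edgeVertices_le_of_two_le_card {r : ℕ} (hr : 2 ≤ r)
    (hG : BicycleFree G r) (hS : (S : Set (Sym2 V)) ⊆ G.edgeSet)
    (hdeg : ∀ x ∈ edgeVertices S, 2 ≤ (edgeNeighbors S x).card) :
    (S.card : ℝ) - (edgeVertices S).card ≤
      S.card * Real.log (3 * (edgeVertices S).card) / (2 * (r - 1)) := by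
  have hr' : (2 : ℝ) ≤ r := by exact_mod_cast hr
  have hdiag : ∀ e ∈ S, ¬e.IsDiag := fun e he => G.not_isDiag_of_mem_edgeSet (hS he)
  have hdegrees : ∑ y, ((edgeNeighbors S y).card : ℝ) = 2 * S.card := by
    exact_mod_cast sum_card_edgeNeighbors hdiag
  have hupper : ∑ y, ∑ x ∈ edgeNeighbors S y, Real.log (nbExtensions S (r - 1) x y).card ≤
      2 * S.card * Real.log (3 * (edgeVertices S).card) := by
    rw [← hdegrees, Finset.sum_mul]
    refine Finset.sum_le_sum fun y _ => ?_
    rw [← nsmul_eq_mul]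
    refine Finset.sum_le_card_nsmul _ _ _ fun x hx => ?_
    have hxy : s(x, y) ∈ S := mem_edgeNeighbors.1 (mem_edgeNeighbors_comm.1 hx)
    refine Real.log_le_log (by exact_mod_cast card_nbExtensions_pos hdeg _ hxy) ?_
    rw [mul_comm]
    exact_mod_cast hG.card_nbExtensions_le hS (by omega) hxy
  have hlower := mul_sum_card_mul_log_le_sum_log_card_nbExtensions hdeg (r - 1)
  rw [Nat.cast_sub (by omega), Nat.cast_one] at hlower
  have hmoore := ((mul_le_mul_of_nonneg_left (four_mul_card_sub_le_sum_card_mul_log hdiag hdeg)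
    (by linarith : (0 : ℝ) ≤ r - 1)).trans hlower).trans hupper
  rw [le_div_iff₀ (by linarith)]
  linarith

theorem monotone_log_natCast : Monotone fun n : ℕ => Real.log n := by
  intro a b hab
  obtain rfl | ha := a.eq_zero_or_pos
  · simpa using Real.log_natCast_nonneg b
  · exact Real.log_le_log (by exact_mod_cast ha) (by exact_mod_cast hab)

theorem BicycleFree.card_sub_card_edgeVertices_le {r : ℕ} (hr : 2 ≤ r) (hG : BicycleFree G r)
    (hS : (S : Set (Sym2 V)) ⊆ G.edgeSet) :
    (S.card : ℝ) - (edgeVertices S).card ≤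
      S.card * Real.log (3 * (edgeVertices S).card) / (2 * (r - 1)) := by
  obtain ⟨S', hS', hdeg, hcard⟩ := exists_subset_two_le_card_edgeNeighbors S
  have hr' : (2 : ℝ) ≤ r := by exact_mod_cast hr
  have hexcess : (S.card : ℝ) + (edgeVertices S').card ≤ S'.card + (edgeVertices S).card := by
    exact_mod_cast hcard
  have hvertices := Finset.card_le_card (edgeVertices_mono hS')
  have hlog : Real.log (3 * (edgeVertices S').card) ≤ Real.log (3 * (edgeVertices S).card) := by
    exact_mod_cast monotone_log_natCast (Nat.mul_le_mul_left 3 hvertices)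
  calc (S.card : ℝ) - (edgeVertices S).card ≤ S'.card - (edgeVertices S').card := by linarith
    _ ≤ S'.card * Real.log (3 * (edgeVertices S').card) / (2 * (r - 1)) :=
      hG.card_sub_card_edgeVertices_le_of_two_le_card hr
        ((Finset.coe_subset.2 hS').trans hS) hdeg
    _ ≤ S.card * Real.log (3 * (edgeVertices S).card) / (2 * (r - 1)) := by
      have hlog' : 0 ≤ Real.log (3 * (edgeVertices S).card) := by
        exact_mod_cast Real.log_natCast_nonneg (3 * (edgeVertices S).card)
      have hcard' := Finset.card_le_card hS'
      have : (0 : ℝ) < r - 1 := by linarith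
      refine div_le_div_of_nonneg_right ?_ (by linarith)
      exact (mul_le_mul_of_nonneg_left hlog (by positivity)).trans (by gcongr)

end Moore

section Exploration

variable {V : Type*} [Fintype V] {G : SimpleGraph V} {S K : Finset (Sym2 V)} {root x y z : V}
  {l : List V} {fresh : Bool}

/-- The neighbours of `x` in `G` along edges outside `K`. -/
def unexplored (G : SimpleGraph V) (x : V) (K : Finset (Sym2 V)) : Finset V :=
  {y | G.Adj x y ∧ s(x, y) ∉ K}

/-- The edge sets found by a depth-first search in `G` that starts with the edges `K` and the
stack `l` and makes at most `N` moves, at most `t` of them along new edges. By default the search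
advances when `fresh` holds, that is, when its last move reached a new vertex, and pops the stack
otherwise; `b` is the number of exceptions to this rule which are allowed. -/
def explorations (G : SimpleGraph V) :
    ℕ → ℕ → ℕ → List V → Finset (Sym2 V) → Bool → Finset (Finset (Sym2 V))
  | _, _, _, [], K, _ => {K}
  | 0, _, _, _ :: _, _, _ => ∅
  | N + 1, t, b, x :: l, K, fresh =>
    (if fresh.toNat ≤ b then explorations G N t (b - fresh.toNat) l K false else ∅) ∪
    (if (!fresh).toNat ≤ b ∧ 0 < t then
      (unexplored G x K).biUnion fun y =>
        explorations G N (t - 1) (b - (!fresh).toNat)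
          (if y ∈ edgeVertices K then x :: l else y :: x :: l) (insert s(x, y) K)
          (decide (y ∉ edgeVertices K))
    else ∅)

theorem edgeVertices_insert (K : Finset (Sym2 V)) (x y : V) :
    edgeVertices (insert s(x, y) K) = insert x (insert y (edgeVertices K)) := by
  ext v
  simp only [mem_edgeVertices, Finset.mem_insert, Sym2.eq_iff]
  grind

theorem card_unexplored_lt [G.LocallyFinite] (hK : (K : Set (Sym2 V)) ⊆ G.edgeSet)
    (hx : x ∈ edgeVertices K) : (unexplored G x K).card < G.degree x := by
  obtain ⟨y, hxy⟩ := mem_edgeVertices.1 hx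
  rw [← SimpleGraph.card_neighborFinset_eq_degree]
  refine Finset.card_lt_card (Finset.ssubset_iff_of_subset (fun z hz => ?_) |>.2 ⟨y, ?_, ?_⟩)
  · simpa using (Finset.mem_filter.1 hz).2.1
  · simpa using hK hxy
  · simp [unexplored, hxy]

theorem card_biUnion_unexplored_le [G.LocallyFinite] {d : ℕ} (hd : 1 ≤ d)
    (hdeg : ∀ v, G.degree v ≤ d)
    (hK : (K : Set (Sym2 V)) ⊆ G.edgeSet) (hx : x ∈ edgeVertices K) {B : ℝ}
    {F : V → Finset (Finset (Sym2 V))} (hF : ∀ y ∈ unexplored G x K, (F y).card ≤ B)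
    (hB : 0 ≤ B) :
    (((unexplored G x K).biUnion F).card : ℝ) ≤ (d - 1) * B := by
  have hcard : ((unexplored G x K).card : ℝ) ≤ d - 1 := by
    have := (card_unexplored_lt hK hx).trans_le (hdeg x)
    rw [← Nat.cast_one, ← Nat.cast_sub hd]
    exact_mod_cast Nat.le_sub_one_of_lt this
  calc (((unexplored G x K).biUnion F).card : ℝ)
      ≤ ∑ y ∈ unexplored G x K, ((F y).card : ℝ) := by exact_mod_cast Finset.card_biUnion_le
    _ ≤ (unexplored G x K).card * B := by
        rw [← nsmul_eq_mul]
        exact Finset.sum_le_card_nsmul _ _ _ hF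
    _ ≤ (d - 1) * B := mul_le_mul_of_nonneg_right hcard hB

theorem mem_edgeVertices_insert_of_mem_stack (hl : ∀ v ∈ x :: l, v ∈ edgeVertices K) {v : V}
    (hv : v ∈ if y ∈ edgeVertices K then x :: l else y :: x :: l) :
    v ∈ edgeVertices (insert s(x, y) K) := by
  have := hl v
  rw [edgeVertices_insert]
  grind

/- The weight `X` of a unit of budget makes the default move and the exceptional move contribute
`1` and `X⁻¹` respectively. -/
theorem card_explorations_le [G.LocallyFinite] {d : ℕ} (hd : 2 ≤ d)
    (hdeg : ∀ v, G.degree v ≤ d) {X : ℝ} (hX : 1 ≤ X) (N t b : ℕ)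
    (hK : (K : Set (Sym2 V)) ⊆ G.edgeSet) (hl : ∀ v ∈ l, v ∈ edgeVertices K) :
    ((explorations G N t b l K fresh).card : ℝ) ≤ (d - 1) ^ t * X ^ b * (1 + X⁻¹) ^ N := by
  have hd' : (1 : ℝ) ≤ d - 1 := by
    have : (2 : ℝ) ≤ d := by exact_mod_cast hd
    linarith
  have hX' : 1 ≤ 1 + X⁻¹ := le_add_of_nonneg_right (by positivity)
  have hone : ∀ N t b : ℕ, 1 ≤ ((d : ℝ) - 1) ^ t * X ^ b * (1 + X⁻¹) ^ N := fun N t b =>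
    one_le_mul_of_one_le_of_one_le (one_le_mul_of_one_le_of_one_le (one_le_pow₀ hd')
      (one_le_pow₀ hX)) (one_le_pow₀ hX')
  induction N generalizing t b l K fresh with
  | zero =>
    refine le_trans ?_ (hone 0 t b)
    cases l <;> simp [explorations]
  | succ N ih =>
    rcases l with _ | ⟨x, l⟩
    · simpa [explorations] using hone (N + 1) t b
    have hbudget : ∀ c ≤ b, X ^ (b - c) = X ^ b * X⁻¹ ^ c := fun c hc => by
      rw [pow_sub₀ _ (by positivity) hc, inv_pow]
    rw [explorations]
    refine (Nat.cast_le.2 (Finset.card_union_le _ _)).trans ?_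
    rw [Nat.cast_add]
    set B := ((d : ℝ) - 1) ^ t * X ^ b * (1 + X⁻¹) ^ N with hB
    have hmoves : B * X⁻¹ ^ fresh.toNat + B * X⁻¹ ^ (!fresh).toNat =
        (d - 1) ^ t * X ^ b * (1 + X⁻¹) ^ (N + 1) := by
      rw [pow_succ, hB]
      cases fresh <;> simp only [Bool.not_true, Bool.not_false, Bool.toNat_true,
        Bool.toNat_false] <;> ring
    rw [← hmoves]
    have hBX : ∀ c : ℕ, 0 ≤ B * X⁻¹ ^ c := fun c => by positivity
    refine add_le_add ?_ ?_ <;> split_ifs with hmove <;>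
      try simpa only [Finset.card_empty, Nat.cast_zero] using hBX _
    · refine (ih t _ hK fun v hv => hl v (by simp [hv])).trans_eq ?_
      rw [hbudget _ hmove, hB]
      ring
    · obtain ⟨t, rfl⟩ := Nat.exists_eq_add_one_of_ne_zero hmove.2.ne'
      refine (card_biUnion_unexplored_le (by omega) hdeg hK (hl x (by simp)) (fun y hy => ih t _ ?_
        fun v => mem_edgeVertices_insert_of_mem_stack hl) (by positivity)).trans_eq ?_
      · rw [Finset.coe_insert]
        exact Set.insert_subset (Finset.mem_filter.1 hy).2.1 hK
      · rw [hbudget _ hmove.1, hB]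
        ring

/-- The state of a depth-first search of `S` from `root`: the edges of `K` have been found, `l` is
the stack, and if `fresh` holds then the top of `l` was reached for the first time by the last
move. -/
structure IsExploring (S : Finset (Sym2 V)) (root : V) (l : List V) (K : Finset (Sym2 V))
    (fresh : Bool) : Prop where
  subset : K ⊆ S
  root_mem : root ∈ edgeVertices K
  stack_subset : ∀ v ∈ l, v ∈ edgeVertices K
  closed : ∀ v ∈ edgeVertices K, v ∉ l → ∀ y, s(v, y) ∈ S → s(v, y) ∈ K
  fresh_top : fresh → ∃ x ∈ l.head?, (edgeNeighbors K x).card ≤ 1 ∧ x ≠ root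

/-- `1` if the vertex `z` is still to be found or has been found by the last move, `0`
otherwise. -/
def pending (z : V) (l : List V) (K : Finset (Sym2 V)) (fresh : Bool) : ℕ :=
  if z ∉ edgeVertices K ∨ (fresh ∧ l.head? = some z) then 1 else 0

namespace IsExploring

theorem pop (h : IsExploring S root (x :: l) K fresh) (hx : ∀ y, s(x, y) ∈ S → s(x, y) ∈ K) :
    IsExploring S root l K false where
  subset := h.subset
  root_mem := h.root_mem
  stack_subset v hv := h.stack_subset v (by simp [hv])
  closed v hv hvl y hvy := by
    by_cases hvx : v = x
    · exact hvx ▸ hx y (hvx ▸ hvy)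
    · exact h.closed v hv (by simp [hvx, hvl]) y hvy
  fresh_top hf := by simp at hf

theorem pending_pop (hdeg : ∀ v ∈ edgeVertices S, v ≠ z → v ≠ root → 2 ≤ (edgeNeighbors S v).card)
    (h : IsExploring S root (x :: l) K fresh) (hx : ∀ y, s(x, y) ∈ S → s(x, y) ∈ K) :
    pending z l K false + fresh.toNat ≤ pending z (x :: l) K fresh := by
  cases fresh with
  | false => simp [pending]
  | true =>
    obtain ⟨x', hx', hcard, hroot⟩ := h.fresh_top rfl
    obtain rfl : x = x' := by simpa using hx'
    have hxK : x ∈ edgeVertices K := h.stack_subset x (by simp)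
    obtain rfl : x = z := by
      by_contra hxz
      have htwo := hdeg x (edgeVertices_mono h.subset hxK) hxz hroot
      have hsub : edgeNeighbors S x ⊆ edgeNeighbors K x := fun y hy =>
        mem_edgeNeighbors.2 (hx y (mem_edgeNeighbors.1 hy))
      have := Finset.card_le_card hsub
      omega
    simp [pending, hxK]

theorem advance (h : IsExploring S root (x :: l) K fresh) (hxy : s(x, y) ∈ S) :
    IsExploring S root (if y ∈ edgeVertices K then x :: l else y :: x :: l) (insert s(x, y) K)
      (decide (y ∉ edgeVertices K)) where
  subset := Finset.insert_subset hxy h.subset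
  root_mem := edgeVertices_mono (Finset.subset_insert _ _) h.root_mem
  stack_subset _ := mem_edgeVertices_insert_of_mem_stack h.stack_subset
  closed v hv hvl w hvw := by
    have := h.closed v
    rw [edgeVertices_insert] at hv
    grind
  fresh_top hy := by
    rw [decide_eq_true_iff] at hy
    refine ⟨y, by simp [hy], ?_, fun hroot => hy (hroot ▸ h.root_mem)⟩
    have honly : ∀ w ∈ edgeNeighbors (insert s(x, y) K) y, w = x := by
      intro w hw
      rw [mem_edgeNeighbors, Finset.mem_insert, Sym2.eq_iff] at hw
      obtain ((⟨rfl, rfl⟩ | ⟨-, rfl⟩) | hyw) := hw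
      exacts [rfl, rfl, absurd (left_mem_edgeVertices hyw) hy]
    exact Finset.card_le_one.2 fun a ha b hb => (honly a ha).trans (honly b hb).symm

theorem pending_advance (z : V) :
    pending z (if y ∈ edgeVertices K then x :: l else y :: x :: l) (insert s(x, y) K)
      (decide (y ∉ edgeVertices K)) ≤ pending z (x :: l) K fresh := by
  by_cases hz : z ∈ edgeVertices K
  · have hz' : z ∈ edgeVertices (insert s(x, y) K) :=
      edgeVertices_mono (Finset.subset_insert _ _) hz
    by_cases hy : y ∈ edgeVertices K
    · simp [pending, hz', hy]
    · have : y ≠ z := fun hyz => hy (hyz ▸ hz)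
      simp [pending, hz', hy, this]
  · simp only [pending, hz, not_false_eq_true, true_or, if_true]
    split_ifs <;> simp

theorem card_sdiff_advance (h : IsExploring S root (x :: l) K fresh) (hxy : s(x, y) ∈ S)
    (hK : s(x, y) ∉ K) :
    (S \ insert s(x, y) K).card + 1 = (S \ K).card ∧
      (edgeVertices S \ edgeVertices (insert s(x, y) K)).card +
        (decide (y ∉ edgeVertices K)).toNat = (edgeVertices S \ edgeVertices K).card := by
  have hvertices : edgeVertices (insert s(x, y) K) = insert y (edgeVertices K) := by
    rw [edgeVertices_insert, Finset.insert_comm,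
      Finset.insert_eq_of_mem (h.stack_subset x (by simp))]
  refine ⟨?_, ?_⟩
  · rw [Finset.sdiff_insert, Finset.card_erase_add_one (Finset.mem_sdiff.2 ⟨hxy, hK⟩)]
  · rw [hvertices]
    by_cases hy : y ∈ edgeVertices K
    · simp [hy]
    · rw [Finset.sdiff_insert, decide_eq_true hy, Bool.toNat_true,
        Finset.card_erase_add_one (Finset.mem_sdiff.2 ⟨right_mem_edgeVertices hxy, hy⟩)]

theorem eq_of_nil (hconn : ∀ K ⊆ S, root ∈ edgeVertices K → K ≠ S →
      ∃ x ∈ edgeVertices K, ∃ y, s(x, y) ∈ S ∧ s(x, y) ∉ K)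
    (h : IsExploring S root [] K fresh) : K = S ∧ fresh = false := by
  refine ⟨?_, ?_⟩
  · by_contra hne
    obtain ⟨x, hx, y, hxy, hxyK⟩ := hconn K h.subset h.root_mem hne
    exact hxyK (h.closed x hx List.not_mem_nil y hxy)
  · rw [Bool.eq_false_iff]
    intro hfresh
    simpa using h.fresh_top hfresh

/- Every exception to the default rule either closes a cycle of `S` or is caused by the possible
leaf `z`, so the exceptions are bounded by the excess of edges over vertices. -/
theorem exists_budget_forall_mem_explorations (hS : (S : Set (Sym2 V)) ⊆ G.edgeSet)
    (hconn : ∀ K ⊆ S, root ∈ edgeVertices K → K ≠ S →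
      ∃ x ∈ edgeVertices K, ∃ y, s(x, y) ∈ S ∧ s(x, y) ∉ K)
    (hdeg : ∀ v ∈ edgeVertices S, v ≠ z → v ≠ root → 2 ≤ (edgeNeighbors S v).card)
    (h : IsExploring S root l K fresh) {N t : ℕ}
    (hN : (S \ K).card + (edgeVertices S \ edgeVertices K).card + l.length ≤ N)
    (ht : (S \ K).card ≤ t) :
    ∃ b₀, b₀ + (edgeVertices S \ edgeVertices K).card + fresh.toNat ≤
        (S \ K).card + 2 * pending z l K fresh ∧
      ∀ b ≥ b₀, S ∈ explorations G N t b l K fresh := by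
  induction N generalizing t l K fresh with
  | zero =>
    obtain rfl : l = [] := List.length_eq_zero_iff.1 (by omega)
    obtain ⟨rfl, rfl⟩ := h.eq_of_nil hconn
    exact ⟨0, by simp, fun b _ => by simp [explorations]⟩
  | succ N ih =>
    rcases l with _ | ⟨x, l⟩
    · obtain ⟨rfl, rfl⟩ := h.eq_of_nil hconn
      exact ⟨0, by simp, fun b _ => by simp [explorations]⟩
    rw [List.length_cons] at hN
    by_cases hx : ∀ y, s(x, y) ∈ S → s(x, y) ∈ K
    · obtain ⟨b₀, hb₀, hmem⟩ := ih (t := t) (h.pop hx) (by omega) ht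
      have hpending := h.pending_pop hdeg hx
      rw [Bool.toNat_false] at hb₀
      refine ⟨b₀ + fresh.toNat, by omega, fun b hb => ?_⟩
      rw [explorations, if_pos (by omega)]
      exact Finset.mem_union_left _ (hmem _ (by omega))
    · push Not at hx
      obtain ⟨y, hxy, hxyK⟩ := hx
      obtain ⟨hedges, hvertices⟩ := h.card_sdiff_advance hxy hxyK
      obtain ⟨b₀, hb₀, hmem⟩ := ih (t := t - 1) (h.advance hxy)
        (by split_ifs with hy <;> simp [hy] at hvertices ⊢ <;> omega) (by omega)
      have hpending : _ ≤ pending z (x :: l) K fresh := pending_advance (x := x) (y := y) z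
      have hnot : fresh.toNat + (!fresh).toNat = 1 := by cases fresh <;> rfl
      refine ⟨b₀ + (!fresh).toNat, by omega, fun b hb => ?_⟩
      rw [explorations, if_pos (c := _ ∧ _) ⟨by omega, by omega⟩]
      exact Finset.mem_union_right _ (Finset.mem_biUnion.2 ⟨y,
        Finset.mem_filter.2 ⟨Finset.mem_univ y, hS hxy, hxyK⟩, hmem _ (by omega)⟩)

end IsExploring

end Exploration

section CountingGivenSupport

theorem card_le_card_image_take_mul_card_image_drop {α : Type*} {i j : ℕ} (hij : i ≤ j)
    (P : Finset (List α)) :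
    P.card ≤ (P.image (List.take j)).card * (P.image (List.drop i)).card := by
  rw [← Finset.card_product]
  refine Finset.card_le_card_of_injOn (fun l => (l.take j, l.drop i))
    (fun l hl => Finset.mem_product.2
      ⟨Finset.mem_image_of_mem _ hl, Finset.mem_image_of_mem _ hl⟩) fun l _ l' _ h => ?_
  obtain ⟨htake, hdrop⟩ := Prod.mk.inj h
  have htake' := congrArg (List.take i) htake
  rw [List.take_take, List.take_take, min_eq_left hij] at htake'
  rw [← List.take_append_drop i l, ← List.take_append_drop i l', htake', hdrop]

variable {V : Type*} [Finite V] {G : SimpleGraph V} {r : ℕ} {A : Finset V}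

theorem BicycleFree.card_isNBWalk_le (hG : BicycleFree G r) {u w : V} {ℓ q : ℕ}
    (hℓ : ℓ ≤ (q + 1) * r) {Q : Finset (List V)}
    (hQ : ∀ l ∈ Q, IsNBWalk G u w ℓ l) (hA : ∀ l ∈ Q, ∀ x ∈ l, x ∈ A) :
    Q.card ≤ 3 * (3 * A.card) ^ q := by
  induction q generalizing Q u ℓ with
  | zero => simpa using hG.card_isNBWalk_le_three (by simpa using hℓ) hQ
  | succ q ih =>
    obtain rfl | ⟨l₀, hl₀⟩ := Q.eq_empty_or_nonempty
    · simp
    obtain hshort | hlong := le_or_gt ℓ r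
    · have hpos : 0 < A.card :=
        Finset.card_pos.2 ⟨u, hA l₀ hl₀ u (List.mem_of_mem_head? (hQ l₀ hl₀).head?_eq)⟩
      exact (hG.card_isNBWalk_le_three hshort hQ).trans
        (Nat.le_mul_of_pos_right 3 (by positivity))
    have hmaps : ∀ l ∈ Q, l.getD r u ∈ A := by
      intro l hl
      rw [List.getD_eq_getElem _ _ (by have := (hQ l hl).length_eq; omega)]
      exact hA l hl _ (List.getElem_mem _)
    have hfiber : ∀ c ∈ A, {l ∈ Q | l.getD r u = c}.card ≤ 3 * (3 * (3 * A.card) ^ q) := by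
      intro c _
      refine (card_le_card_image_take_mul_card_image_drop r.le_succ _).trans
        (Nat.mul_le_mul ?_ (ih (u := c) (ℓ := ℓ - r) ?_ ?_ ?_))
      · refine hG.card_isNBWalk_le_three (u := u) (w := c) le_rfl fun l' hl' => ?_
        obtain ⟨l, hl, rfl⟩ := Finset.mem_image.1 hl'
        obtain ⟨hlQ, rfl⟩ := Finset.mem_filter.1 hl
        exact (hQ l hlQ).take hlong.le
      · have : (q + 1 + 1) * r = (q + 1) * r + r := by ring
        omega
      · intro l' hl'
        obtain ⟨l, hl, rfl⟩ := Finset.mem_image.1 hl'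
        obtain ⟨hlQ, rfl⟩ := Finset.mem_filter.1 hl
        exact (hQ l hlQ).drop hlong.le
      · intro l' hl' x hx
        obtain ⟨l, hl, rfl⟩ := Finset.mem_image.1 hl'
        exact hA l (Finset.mem_filter.1 hl).1 x (List.mem_of_mem_drop hx)
    exact (Finset.card_le_mul_card_image_of_maps_to hmaps _ hfiber).trans_eq (by ring)

end CountingGivenSupport

section Hikes

variable {V : Type*} {G : SimpleGraph V} {m : ℕ} {f : Fin (2 * m + 1) → V}

theorem IsHike.reverse (h : IsHike G m f) : IsHike G m (f ∘ Fin.rev) := by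
  obtain ⟨hadj, hclosed, hnb⟩ := h
  have rev_eq {i j : ℕ} (hi : i < 2 * m + 1) (hij : i + j = 2 * m) :
      (f ∘ Fin.rev) ⟨i, hi⟩ = f ⟨j, by omega⟩ :=
    congrArg f (Fin.ext (by rw [Fin.val_rev]; dsimp only; omega))
  refine ⟨fun i hi => ?_, ?_, fun i hi1 hi hne => ?_⟩
  · rw [rev_eq (j := 2 * m - (i + 1) + 1) _ (by omega), rev_eq (j := 2 * m - (i + 1)) _ (by omega)]
    exact (hadj _ (by omega)).symm
  · rw [rev_eq (j := 0) _ (by omega), rev_eq (j := 2 * m) _ (by omega), hclosed]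
  · rw [rev_eq (j := 2 * m - i - 1) _ (by omega), rev_eq (j := 2 * m - i + 1) _ (by omega)]
    exact (hnb _ (by omega) (by omega) (by omega)).symm

/-- The vertices visited in the first half of the closed walk `f`. -/
def firstHalf (f : Fin (2 * m + 1) → V) : List V :=
  List.ofFn fun i : Fin (m + 1) => f ⟨i, by omega⟩

theorem IsHike.isNBWalk_firstHalf (h : IsHike G m f) :
    IsNBWalk G (f ⟨0, by omega⟩) (f ⟨m, by omega⟩) m (firstHalf f) := by
  obtain ⟨hadj, -, hnb⟩ := h
  refine ⟨?_, fun i hi => ?_, by simp [firstHalf], by simp [firstHalf], ?_⟩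
  · rw [List.isChain_iff_getElem]
    intro i hi
    rw [firstHalf, List.length_ofFn] at hi
    simpa [firstHalf, -List.ofFn_succ] using hadj i (by omega)
  · rw [firstHalf, List.length_ofFn] at hi
    simpa [firstHalf, -List.ofFn_succ] using
      (hnb (i + 1) (by omega) (by omega) (by omega)).symm
  · rw [List.getLast?_eq_getElem?]
    simp [firstHalf, -List.ofFn_succ]

theorem eq_of_firstHalf_eq {g : Fin (2 * m + 1) → V} (hfirst : firstHalf f = firstHalf g)
    (hsecond : firstHalf (f ∘ Fin.rev) = firstHalf (g ∘ Fin.rev)) : f = g := by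
  rw [firstHalf, firstHalf, List.ofFn_inj] at hfirst hsecond
  funext i
  obtain hi | hi := le_or_gt i.1 m
  · exact congrFun hfirst ⟨i, by omega⟩
  · have hrev : ∀ h : 2 * m - i < 2 * m + 1, Fin.rev (⟨2 * m - i, h⟩ : Fin (2 * m + 1)) = i :=
      fun h => by simp [Fin.ext_iff]; omega
    have := congrFun hsecond ⟨2 * m - i, by omega⟩
    simpa only [Function.comp_apply, hrev] using this

theorem BicycleFree.card_isHike_le [Finite V] {r q : ℕ} (hG : BicycleFree G r)
    (hq : m ≤ (q + 1) * r) {A : Finset V} {v : V} {Q : Finset (Fin (2 * m + 1) → V)}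
    (hQ : ∀ f ∈ Q, IsHike G m f) (hv : ∀ f ∈ Q, f ⟨0, by omega⟩ = v)
    (hA : ∀ f ∈ Q, ∀ i, f i ∈ A) :
    Q.card ≤ (3 * (3 * A.card) ^ q) * (3 * (3 * A.card) ^ q) * A.card := by
  refine Finset.card_le_mul_card_image_of_maps_to (f := fun f => f ⟨m, by omega⟩)
    (fun f hf => hA f hf _) _ fun c _ => ?_
  set P := {f ∈ Q | f ⟨m, by omega⟩ = c}
  have hinj : P.card ≤
      (P.image firstHalf ×ˢ P.image fun f => firstHalf (f ∘ Fin.rev)).card :=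
    Finset.card_le_card_of_injOn (fun f => (firstHalf f, firstHalf (f ∘ Fin.rev)))
      (fun f hf => Finset.mem_product.2
        ⟨Finset.mem_image_of_mem _ hf, Finset.mem_image_of_mem _ hf⟩)
      fun f _ g _ h => eq_of_firstHalf_eq (Prod.mk.inj h).1 (Prod.mk.inj h).2
  rw [Finset.card_product] at hinj
  have hPQ : ∀ f ∈ P, f ∈ Q := Finset.filter_subset _ Q
  have hPm : ∀ f ∈ P, f ⟨m, by omega⟩ = c := fun f hf => (Finset.mem_filter.1 hf).2
  refine hinj.trans (Nat.mul_le_mul ?_ ?_) <;>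
    refine hG.card_isNBWalk_le (u := v) (w := c) hq (Finset.forall_mem_image.2 fun f hf => ?_)
      (Finset.forall_mem_image.2 fun f hf x hx => ?_)
  · exact hv f (hPQ f hf) ▸ hPm f hf ▸ (hQ f (hPQ f hf)).isNBWalk_firstHalf
  · obtain ⟨i, rfl⟩ := List.mem_ofFn.1 hx
    exact hA f (hPQ f hf) _
  · convert (hQ f (hPQ f hf)).reverse.isNBWalk_firstHalf using 1
    · rw [← hv f (hPQ f hf), ← (hQ f (hPQ f hf)).2.1]
      simp [Fin.rev]
    · rw [← hPm f hf, Function.comp_apply]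
      exact congrArg f (Fin.ext (by rw [Fin.val_rev]; dsimp only; omega))
  · obtain ⟨i, rfl⟩ := List.mem_ofFn.1 hx
    exact hA f (hPQ f hf) _

end Hikes

section StepEdges

variable {V : Type*} {g : ℕ → V} {M i : ℕ} {e : Sym2 V}

/-- The edges traversed by the first `M` steps of the sequence `g`. -/
def stepEdges (g : ℕ → V) (M : ℕ) : Finset (Sym2 V) :=
  (Finset.range M).image fun i => s(g i, g (i + 1))

theorem mem_stepEdges : e ∈ stepEdges g M ↔ ∃ i < M, s(g i, g (i + 1)) = e := by
  simp [stepEdges]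

theorem step_mem_stepEdges (hi : i < M) : s(g i, g (i + 1)) ∈ stepEdges g M :=
  mem_stepEdges.2 ⟨i, hi, rfl⟩

theorem stepEdges_succ (g : ℕ → V) (M : ℕ) :
    stepEdges g (M + 1) = insert s(g M, g (M + 1)) (stepEdges g M) := by
  rw [stepEdges, Finset.range_add_one, Finset.image_insert, stepEdges]

theorem exists_eq_of_mem_of_mem_stepEdges {x : V} (hx : x ∈ e) (he : e ∈ stepEdges g M) :
    ∃ i ≤ M, g i = x := by
  obtain ⟨i, hi, rfl⟩ := mem_stepEdges.1 he
  obtain rfl | rfl := Sym2.mem_iff.1 hx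
  exacts [⟨i, hi.le, rfl⟩, ⟨i + 1, hi, rfl⟩]

theorem card_image_range_succ_le (g : ℕ → V) (M : ℕ) :
    ((Finset.range (M + 1)).image g).card ≤ (stepEdges g M).card + 1 := by
  induction M with
  | zero => simp
  | succ M ih =>
    rw [Finset.range_add_one, Finset.image_insert, stepEdges_succ]
    by_cases hold : g (M + 1) ∈ (Finset.range (M + 1)).image g
    · rw [Finset.insert_eq_of_mem hold]
      exact ih.trans (by gcongr; exact Finset.subset_insert _ _)
    · have hnew : s(g M, g (M + 1)) ∉ stepEdges g M := fun he => by
        obtain ⟨i, hi, hgi⟩ := exists_eq_of_mem_of_mem_stepEdges (Sym2.mem_mk_right _ _) he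
        exact hold (Finset.mem_image.2 ⟨i, Finset.mem_range_succ_iff.2 hi, hgi⟩)
      rw [Finset.card_insert_of_notMem hold, Finset.card_insert_of_notMem hnew]
      gcongr

variable [Fintype V]

theorem edgeVertices_stepEdges (hM : M ≠ 0) :
    edgeVertices (stepEdges g M) = (Finset.range (M + 1)).image g := by
  ext x
  simp only [Finset.mem_image, Finset.mem_range_succ_iff]
  refine ⟨fun hx => ?_, ?_⟩
  · obtain ⟨y, hxy⟩ := mem_edgeVertices.1 hx
    exact exists_eq_of_mem_of_mem_stepEdges (Sym2.mem_mk_left x y) hxy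
  · rintro ⟨i, hi, rfl⟩
    obtain hlt | rfl := hi.lt_or_eq
    · exact left_mem_edgeVertices (step_mem_stepEdges hlt)
    · obtain ⟨j, rfl⟩ := Nat.exists_eq_succ_of_ne_zero hM
      exact right_mem_edgeVertices (step_mem_stepEdges j.lt_succ_self)

theorem exists_step_leaving {K : Finset (Sym2 V)} (hK : K ⊆ stepEdges g M)
    (h0 : g 0 ∈ edgeVertices K) (hne : K ≠ stepEdges g M) :
    ∃ x ∈ edgeVertices K, ∃ y, s(x, y) ∈ stepEdges g M ∧ s(x, y) ∉ K := by
  by_contra! hclosed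
  have hvisited : ∀ i ≤ M, g i ∈ edgeVertices K := by
    intro i hi
    induction i with
    | zero => exact h0
    | succ i ih =>
      exact right_mem_edgeVertices (hclosed _ (ih (by omega)) _ (step_mem_stepEdges hi))
  refine hne (hK.antisymm fun e he => ?_)
  obtain ⟨i, hi, rfl⟩ := mem_stepEdges.1 he
  exact hclosed _ (hvisited i hi.le) _ he

end StepEdges

section HikeEdges

variable {V : Type*} {G : SimpleGraph V} {m : ℕ} {f : Fin (2 * m + 1) → V} {i : ℕ}

/-- The vertices of the closed walk `f` as a sequence indexed by `ℕ`, with period `2 * m + 1`. -/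
def hikeSeq (f : Fin (2 * m + 1) → V) (i : ℕ) : V := f (Fin.ofNat (2 * m + 1) i)

theorem hikeSeq_of_lt (f : Fin (2 * m + 1) → V) (hi : i < 2 * m + 1) :
    hikeSeq f i = f ⟨i, hi⟩ :=
  congrArg f (Fin.ext (Nat.mod_eq_of_lt hi))

/-- The edges traversed by the closed walk `f`. -/
def hikeEdges (f : Fin (2 * m + 1) → V) : Finset (Sym2 V) := stepEdges (hikeSeq f) (2 * m)

theorem IsHike.adj_hikeSeq (h : IsHike G m f) (hi : i < 2 * m) :
    G.Adj (hikeSeq f i) (hikeSeq f (i + 1)) := by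
  rw [hikeSeq_of_lt f (by omega), hikeSeq_of_lt f (by omega)]
  exact h.1 i hi

theorem IsHike.hikeSeq_two_mul (h : IsHike G m f) : hikeSeq f (2 * m) = hikeSeq f 0 := by
  rw [hikeSeq_of_lt f (by omega), hikeSeq_of_lt f (by omega)]
  exact h.2.1

theorem IsHike.hikeSeq_add_two_ne (h : IsHike G m f) (hi : i + 1 < 2 * m) (hm : i + 1 ≠ m) :
    hikeSeq f (i + 2) ≠ hikeSeq f i := by
  rw [hikeSeq_of_lt f (by omega), hikeSeq_of_lt f (by omega)]
  exact h.2.2 (i + 1) (by omega) hi hm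

theorem IsHike.hikeEdges_subset (h : IsHike G m f) :
    (hikeEdges f : Set (Sym2 V)) ⊆ G.edgeSet := fun e he => by
  obtain ⟨i, hi, rfl⟩ := mem_stepEdges.1 he
  exact h.adj_hikeSeq hi

theorem edgeCount_eq_card_filter_range [DecidableEq V] (f : Fin (2 * m + 1) → V) (e : Sym2 V) :
    edgeCount m f e =
      {i ∈ Finset.range (2 * m) | s(hikeSeq f i, hikeSeq f (i + 1)) = e}.card := by
  rw [edgeCount, ← Finset.card_map Fin.valEmbedding]
  congr 1
  ext i
  simp only [Finset.mem_map, Finset.mem_filter, Finset.mem_univ, true_and, Finset.mem_range]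
  constructor
  · rintro ⟨j, hj, rfl⟩
    refine ⟨j.2, ?_⟩
    rw [← hj, Fin.valEmbedding_apply, hikeSeq_of_lt f (by omega), hikeSeq_of_lt f (by omega)]
  · rintro ⟨hi, he⟩
    rw [hikeSeq_of_lt f (by omega), hikeSeq_of_lt f (by omega)] at he
    exact ⟨⟨i, hi⟩, he, rfl⟩

theorem IsSingletonFree.card_hikeEdges_le [DecidableEq V] (hf : IsSingletonFree m f) :
    (hikeEdges f).card ≤ m := by
  have htwice : ∀ e ∈ hikeEdges f,
      2 ≤ {i ∈ Finset.range (2 * m) | s(hikeSeq f i, hikeSeq f (i + 1)) = e}.card := by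
    intro e he
    have hne := edgeCount_eq_card_filter_range f e ▸ hf e
    obtain ⟨i, hi, hie⟩ := mem_stepEdges.1 he
    have hpos : 0 < {i ∈ Finset.range (2 * m) | s(hikeSeq f i, hikeSeq f (i + 1)) = e}.card :=
      Finset.card_pos.2 ⟨i, Finset.mem_filter.2 ⟨Finset.mem_range.2 hi, hie⟩⟩
    omega
  have hcount := Finset.mul_card_image_le_card_of_maps_to
    (fun i hi => step_mem_stepEdges (Finset.mem_range.1 hi)) 2 htwice
  rw [Finset.card_range] at hcount
  exact Nat.le_of_mul_le_mul_left hcount two_pos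

variable [Fintype V]

theorem mem_edgeVertices_hikeEdges (hm : m ≠ 0) (i : Fin (2 * m + 1)) :
    f i ∈ edgeVertices (hikeEdges f) := by
  rw [hikeEdges, edgeVertices_stepEdges (by omega)]
  exact Finset.mem_image.2 ⟨i, Finset.mem_range.2 i.2, hikeSeq_of_lt f i.2⟩

theorem card_edgeVertices_hikeEdges_le (hm : m ≠ 0) (f : Fin (2 * m + 1) → V) :
    (edgeVertices (hikeEdges f)).card ≤ (hikeEdges f).card + 1 := by
  rw [hikeEdges, edgeVertices_stepEdges (by omega)]
  exact card_image_range_succ_le _ _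

theorem IsHike.two_le_card_edgeNeighbors (h : IsHike G m f) {v : V}
    (hv : v ∈ edgeVertices (hikeEdges f)) (hvm : v ≠ hikeSeq f m) (hv0 : v ≠ hikeSeq f 0) :
    2 ≤ (edgeNeighbors (hikeEdges f) v).card := by
  obtain ⟨y, hvy⟩ := mem_edgeVertices.1 hv
  obtain ⟨i, hi, rfl⟩ := exists_eq_of_mem_of_mem_stepEdges (Sym2.mem_mk_left v y) hvy
  have hi2m : i ≠ 2 * m := fun hi => hv0 (hi ▸ h.hikeSeq_two_mul)
  obtain ⟨j, rfl⟩ := Nat.exists_eq_succ_of_ne_zero (ne_of_apply_ne _ hv0)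
  have hprev : hikeSeq f j ∈ edgeNeighbors (hikeEdges f) (hikeSeq f (j + 1)) :=
    mem_edgeNeighbors_comm.1 (mem_edgeNeighbors.2 (step_mem_stepEdges (by omega)))
  have hnext : hikeSeq f (j + 2) ∈ edgeNeighbors (hikeEdges f) (hikeSeq f (j + 1)) :=
    mem_edgeNeighbors.2 (step_mem_stepEdges (by omega))
  exact Finset.one_lt_card.2 ⟨_, hnext, _, hprev,
    h.hikeSeq_add_two_ne (by omega) (ne_of_apply_ne _ hvm)⟩

end HikeEdges

section CountingHikes

variable {V : Type*} [Fintype V] {G : SimpleGraph V} {S : Finset (Sym2 V)} {x y z : V} {m r : ℕ}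

theorem edgeVertices_singleton (x y : V) :
    edgeVertices ({s(x, y)} : Finset (Sym2 V)) = {x, y} := by
  have hempty : edgeVertices (∅ : Finset (Sym2 V)) = ∅ := by simp [edgeVertices]
  rw [← insert_empty_eq, edgeVertices_insert, hempty, insert_empty_eq]

theorem IsExploring.singleton (hxy : s(x, y) ∈ S) (hne : x ≠ y) :
    IsExploring S x [y, x] {s(x, y)} true where
  subset := Finset.singleton_subset_iff.2 hxy
  root_mem := by simp [edgeVertices_singleton]
  stack_subset v hv := by simpa [edgeVertices_singleton, or_comm] using hv
  closed v hv hvl := by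
    rw [edgeVertices_singleton] at hv
    simp only [Finset.mem_insert, Finset.mem_singleton] at hv
    simp [hv.symm] at hvl
  fresh_top _ := by
    refine ⟨y, rfl, Finset.card_le_one.2 ?_, hne.symm⟩
    simp only [mem_edgeNeighbors, Finset.mem_singleton, Sym2.eq_iff]
    grind

theorem mem_explorations_of_card_add_two_le (hS : (S : Set (Sym2 V)) ⊆ G.edgeSet)
    (hconn : ∀ K ⊆ S, x ∈ edgeVertices K → K ≠ S →
      ∃ v ∈ edgeVertices K, ∃ w, s(v, w) ∈ S ∧ s(v, w) ∉ K)
    (hdeg : ∀ v ∈ edgeVertices S, v ≠ z → v ≠ x → 2 ≤ (edgeNeighbors S v).card)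
    (hxy : s(x, y) ∈ S) (hedges : S.card ≤ m) (hvertices : (edgeVertices S).card ≤ m + 1)
    {b : ℕ} (hb : S.card + 2 ≤ b + (edgeVertices S).card) :
    S ∈ explorations G (2 * m) (m - 1) b [y, x] {s(x, y)} true := by
  have hne : x ≠ y := (hS hxy : G.Adj x y).ne
  have hstart := IsExploring.singleton hxy hne
  have hcardE : (S \ {s(x, y)}).card + 1 = S.card := by
    simpa using Finset.card_sdiff_add_card_eq_card hstart.subset
  have hcardV : (edgeVertices S \ edgeVertices {s(x, y)}).card + 2 = (edgeVertices S).card := by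
    have := Finset.card_sdiff_add_card_eq_card (edgeVertices_mono hstart.subset)
    rw [edgeVertices_singleton, Finset.card_pair hne] at this
    rwa [edgeVertices_singleton]
  obtain ⟨b₀, hb₀, hmem⟩ := hstart.exists_budget_forall_mem_explorations hS hconn hdeg
    (N := 2 * m) (t := m - 1) (by simp only [List.length_cons, List.length_nil]; omega) (by omega)
  have hpending : pending z [y, x] {s(x, y)} true ≤ 1 := by
    rw [pending]
    split_ifs <;> simp
  rw [Bool.toNat_true] at hb₀
  exact hmem b (by omega)

/-- The bound given by `BicycleFree.card_sub_card_edgeVertices_le` on the number of edges minus the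
number of vertices, for edge sets with at most `m` edges and `m + 1` vertices. -/
def excessBound (m r : ℕ) : ℕ := ⌊(m : ℝ) * Real.log (3 * (m + 1)) / (2 * (r - 1))⌋₊

theorem BicycleFree.card_le_excessBound_add (hr : 2 ≤ r) (hG : BicycleFree G r)
    (hS : (S : Set (Sym2 V)) ⊆ G.edgeSet) (hedges : S.card ≤ m)
    (hvertices : (edgeVertices S).card ≤ m + 1) :
    S.card ≤ excessBound m r + (edgeVertices S).card := by
  have hr' : (0 : ℝ) < r - 1 := by
    have : (2 : ℝ) ≤ r := by exact_mod_cast hr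
    linarith
  have hlog : Real.log (3 * (edgeVertices S).card) ≤ Real.log (3 * (m + 1)) := by
    exact_mod_cast monotone_log_natCast (Nat.mul_le_mul_left 3 hvertices)
  have hlog_nonneg : 0 ≤ Real.log (3 * ((m : ℝ) + 1)) := by
    exact_mod_cast Real.log_natCast_nonneg (3 * (m + 1))
  obtain hle | hlt := le_or_gt S.card (edgeVertices S).card
  · omega
  rw [← Nat.sub_le_iff_le_add]
  refine Nat.le_floor ?_
  rw [Nat.cast_sub hlt.le]
  calc (S.card : ℝ) - (edgeVertices S).card
      ≤ S.card * Real.log (3 * (edgeVertices S).card) / (2 * (r - 1)) :=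
        hG.card_sub_card_edgeVertices_le hr hS
    _ ≤ S.card * Real.log (3 * (m + 1)) / (2 * (r - 1)) := by gcongr
    _ ≤ m * Real.log (3 * (m + 1)) / (2 * (r - 1)) := by gcongr

theorem IsHike.hikeEdges_mem_explorations (hr : 2 ≤ r) (hG : BicycleFree G r) (hm : m ≠ 0)
    {f : Fin (2 * m + 1) → V} (hf : IsHike G m f) (hedges : (hikeEdges f).card ≤ m) :
    hikeEdges f ∈ explorations G (2 * m) (m - 1) (excessBound m r + 2)
      [hikeSeq f 1, hikeSeq f 0] {s(hikeSeq f 0, hikeSeq f 1)} true := by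
  have hvertices := (card_edgeVertices_hikeEdges_le hm f).trans (Nat.succ_le_succ hedges)
  have hexcess := hG.card_le_excessBound_add hr hf.hikeEdges_subset hedges hvertices
  exact mem_explorations_of_card_add_two_le hf.hikeEdges_subset
    (fun K hK h0 hne => exists_step_leaving hK h0 hne)
    (fun v hv hvm hv0 => hf.two_le_card_edgeNeighbors hv hvm hv0)
    (step_mem_stepEdges (by omega)) hedges hvertices (by omega)

/-- The triples `(x, y, S)` where `S` is found by a depth-first search in `G` that starts along the
edge from `x` to `y` and makes at most `b` exceptions to its default rule. They encode the first two
vertices of an `m`-hike together with the set of its edges. -/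
def supports (G : SimpleGraph V) [G.LocallyFinite] (m b : ℕ) :
    Finset (Σ _ : V, Σ _ : V, Finset (Sym2 V)) :=
  Finset.univ.sigma fun x => (G.neighborFinset x).sigma fun y =>
    explorations G (2 * m) (m - 1) b [y, x] {s(x, y)} true

theorem card_supports_le [G.LocallyFinite] {d : ℕ} (hd : 2 ≤ d) (hdeg : ∀ v, G.degree v ≤ d)
    {X : ℝ} (hX : 1 ≤ X) (m b : ℕ) :
    ((supports G m b).card : ℝ) ≤
      Fintype.card V * (d * ((d - 1) ^ (m - 1) * X ^ b * (1 + X⁻¹) ^ (2 * m))) := by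
  have hd' : (0 : ℝ) ≤ d - 1 := by
    have : (2 : ℝ) ≤ d := by exact_mod_cast hd
    linarith
  rw [supports, Finset.card_sigma, Nat.cast_sum, ← nsmul_eq_mul, ← Finset.card_univ]
  refine Finset.sum_le_card_nsmul _ _ _ fun x _ => ?_
  rw [Finset.card_sigma, Nat.cast_sum]
  refine (Finset.sum_le_card_nsmul _ _ ((d - 1) ^ (m - 1) * X ^ b * (1 + X⁻¹) ^ (2 * m))
    fun y hy => card_explorations_le hd hdeg hX _ _ _ (by simpa using hy)
      (by simp [edgeVertices_singleton])).trans ?_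
  rw [nsmul_eq_mul, SimpleGraph.card_neighborFinset_eq_degree]
  gcongr
  exact hdeg x

theorem BicycleFree.card_isHike_of_card_hikeEdges_le [G.LocallyFinite] {d q : ℕ} (hd : 2 ≤ d)
    (hdeg : ∀ v, G.degree v ≤ d) (hr : 2 ≤ r) (hG : BicycleFree G r) (hm : m ≠ 0)
    (hq : m ≤ (q + 1) * r) {X : ℝ} (hX : 1 ≤ X) {Q : Finset (Fin (2 * m + 1) → V)}
    (hQ : ∀ f ∈ Q, IsHike G m f) (hedges : ∀ f ∈ Q, (hikeEdges f).card ≤ m) :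
    (Q.card : ℝ) ≤ (3 * (3 * (m + 1)) ^ q) * (3 * (3 * (m + 1)) ^ q) * (m + 1) *
      (Fintype.card V *
        (d * ((d - 1) ^ (m - 1) * X ^ (excessBound m r + 2) * (1 + X⁻¹) ^ (2 * m)))) := by
  let support (f : Fin (2 * m + 1) → V) : Σ _ : V, Σ _ : V, Finset (Sym2 V) :=
    ⟨hikeSeq f 0, hikeSeq f 1, hikeEdges f⟩
  have hmaps : ∀ f ∈ Q, support f ∈ supports G m (excessBound m r + 2) := fun f hf => by
    simpa [supports, support] using
      ⟨(hQ f hf).adj_hikeSeq (by omega),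
        (hQ f hf).hikeEdges_mem_explorations hr hG hm (hedges f hf)⟩
  have hfiber : ∀ c ∈ supports G m (excessBound m r + 2), {f ∈ Q | support f = c}.card ≤
      (3 * (3 * (m + 1)) ^ q) * (3 * (3 * (m + 1)) ^ q) * (m + 1) := by
    intro c _
    obtain hempty | ⟨f₀, hf₀⟩ := {f ∈ Q | support f = c}.eq_empty_or_nonempty
    · simp [hempty]
    obtain ⟨hf₀Q, rfl⟩ := Finset.mem_filter.1 hf₀
    have hvertices : (edgeVertices (hikeEdges f₀)).card ≤ m + 1 :=
      (card_edgeVertices_hikeEdges_le hm f₀).trans (Nat.succ_le_succ (hedges f₀ hf₀Q))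
    have hsame : ∀ f ∈ {f ∈ Q | support f = support f₀},
        f ∈ Q ∧ hikeSeq f 0 = hikeSeq f₀ 0 ∧ hikeEdges f = hikeEdges f₀ := by
      simp +contextual [support]
    refine (hG.card_isHike_le hq (v := hikeSeq f₀ 0) (A := edgeVertices (hikeEdges f₀))
      (fun f hf => hQ f (hsame f hf).1) (fun f hf => ?_) fun f hf i => ?_).trans (by gcongr)
    · rw [← (hsame f hf).2.1, hikeSeq_of_lt]
    · rw [← (hsame f hf).2.2]
      exact mem_edgeVertices_hikeEdges hm i
  have hcount := Finset.card_le_mul_card_image_of_maps_to hmaps _ hfiber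
  calc (Q.card : ℝ) ≤ (3 * (3 * (m + 1)) ^ q) * (3 * (3 * (m + 1)) ^ q) * (m + 1) *
        (supports G m (excessBound m r + 2)).card := by exact_mod_cast hcount
    _ ≤ _ := by gcongr; exact card_supports_le hd hdeg hX m _

end CountingHikes

section Numerics

theorem excessBound_le {m r : ℕ} {δ : ℝ} (hδ : 0 ≤ δ) (hm : 2 ≤ m) (hr : 11 ≤ r)
    (hk : Real.log (m + 1) ≤ δ * r) : (excessBound m r : ℝ) ≤ 11 / 10 * (δ * (m + 1)) := by
  have hm' : (2 : ℝ) ≤ m := by exact_mod_cast hm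
  have hr' : (11 : ℝ) ≤ r := by exact_mod_cast hr
  have hlog : Real.log (3 * (m + 1)) ≤ 2 * (δ * r) := by
    rw [Real.log_mul (by norm_num) (by linarith)]
    have : Real.log 3 ≤ Real.log (m + 1) := Real.log_le_log (by norm_num) (by linarith)
    linarith
  have hlog_nonneg : 0 ≤ Real.log (3 * ((m : ℝ) + 1)) := Real.log_nonneg (by linarith)
  have hr1 : (0 : ℝ) < 2 * (r - 1) := by linarith
  refine (Nat.floor_le (by positivity)).trans ((div_le_iff₀ hr1).2 ?_)
  calc (m : ℝ) * Real.log (3 * (m + 1)) ≤ (m + 1) * (2 * (δ * r)) := by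
        gcongr
        linarith
    _ = δ * (m + 1) * (2 * r) := by ring
    _ ≤ δ * (m + 1) * (11 / 5 * (r - 1)) :=
        mul_le_mul_of_nonneg_left (by linarith) (by positivity)
    _ = 11 / 10 * (δ * (m + 1)) * (2 * (r - 1)) := by ring

theorem pow_add_two_mul_one_add_inv_pow_le {X κ c : ℝ} {b m : ℕ} (hX : 1 ≤ X) (hXκ : X ≤ κ)
    (hb : b ≤ c) (hm : m ≤ κ) :
    X ^ (b + 2) * (1 + X⁻¹) ^ (2 * m) ≤ κ ^ 2 * Real.exp (c * Real.log X + 2 * (κ * X⁻¹)) := by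
  have hX0 : 0 < X := by linarith
  have hpow : X ^ b ≤ Real.exp (c * Real.log X) := by
    rw [← Real.rpow_natCast, Real.rpow_def_of_pos hX0, mul_comm]
    have := Real.log_nonneg hX
    gcongr
  have hexp : (1 + X⁻¹) ^ (2 * m) ≤ Real.exp (2 * (κ * X⁻¹)) :=
    calc (1 + X⁻¹) ^ (2 * m) ≤ Real.exp X⁻¹ ^ (2 * m) := by
          gcongr
          rw [add_comm]
          exact Real.add_one_le_exp _
      _ = Real.exp (2 * (m * X⁻¹)) := by
          rw [← Real.exp_nat_mul]
          push_cast
          ring_nf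
      _ ≤ Real.exp (2 * (κ * X⁻¹)) := by gcongr
  calc X ^ (b + 2) * (1 + X⁻¹) ^ (2 * m) = X ^ 2 * (X ^ b * (1 + X⁻¹) ^ (2 * m)) := by ring
    _ ≤ κ ^ 2 * (Real.exp (c * Real.log X) * Real.exp (2 * (κ * X⁻¹))) := by gcongr
    _ = κ ^ 2 * Real.exp (c * Real.log X + 2 * (κ * X⁻¹)) := by rw [Real.exp_add]

theorem log_inv_le_mul_log_inv_five_mul {δ : ℝ} (hδ : 0 < δ) (hδ1 : δ ≤ 1 / 10) :
    11 / 10 * Real.log δ⁻¹ ≤ 5 * Real.log (5 * δ)⁻¹ := by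
  have hsplit : Real.log δ⁻¹ = Real.log (5 * δ)⁻¹ + Real.log 5 := by
    rw [Real.log_inv, Real.log_inv, Real.log_mul (by norm_num) hδ.ne']
    ring
  have htwo : Real.log 2 ≤ Real.log (5 * δ)⁻¹ := by
    refine Real.log_le_log (by norm_num) ?_
    rw [le_inv_comm₀ (by norm_num) (by positivity)]
    linarith
  have hfive : Real.log 5 ≤ 3 * Real.log 2 :=
    calc Real.log 5 ≤ Real.log (2 ^ 3) := Real.log_le_log (by norm_num) (by norm_num)
      _ = 3 * Real.log 2 := by rw [Real.log_pow]; norm_num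
  have := Real.log_nonneg one_le_two
  linarith

/- The witness `min κ δ⁻¹` balances the two factors: its logarithm is at most `log δ⁻¹`, while
`κ / min κ δ⁻¹ ≤ 1 + δ * κ`. -/
theorem exists_pow_add_two_mul_one_add_inv_pow_le {δ κ : ℝ} {b m : ℕ} (hδ : 0 < δ)
    (hδ1 : δ ≤ 1 / 10) (hκ : 1 ≤ κ) (hb : b ≤ 11 / 10 * (δ * κ)) (hm : m ≤ κ) :
    ∃ X : ℝ, 1 ≤ X ∧ X ^ (b + 2) * (1 + X⁻¹) ^ (2 * m) ≤
      9 * κ ^ 2 * (Real.exp (5 * δ * Real.log (5 * δ)⁻¹ * κ) * Real.exp (2 * (δ * κ))) := by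
  have hδ_inv : 1 ≤ δ⁻¹ := (one_le_inv₀ hδ).2 (by linarith)
  have hX : 1 ≤ min κ δ⁻¹ := le_min hκ hδ_inv
  refine ⟨min κ δ⁻¹, hX, (pow_add_two_mul_one_add_inv_pow_le hX (min_le_left _ _) hb hm).trans ?_⟩
  have hlog : 11 / 10 * Real.log (min κ δ⁻¹) ≤ 5 * Real.log (5 * δ)⁻¹ := by
    refine le_trans ?_ (log_inv_le_mul_log_inv_five_mul hδ hδ1)
    gcongr
    exact min_le_right _ _
  have hratio : κ * (min κ δ⁻¹)⁻¹ ≤ 1 + δ * κ := by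
    obtain hle | hle := le_total κ δ⁻¹
    · rw [min_eq_left hle, mul_inv_cancel₀ (by positivity)]
      exact le_add_of_nonneg_right (by positivity)
    · rw [min_eq_right hle, inv_inv, mul_comm]
      exact le_add_of_nonneg_left zero_le_one
  have hexp_two : Real.exp 2 ≤ 9 := by
    rw [← one_add_one_eq_two, Real.exp_add]
    nlinarith [Real.exp_one_lt_three, Real.exp_pos 1]
  have hδκ := mul_le_mul_of_nonneg_left hlog (show 0 ≤ δ * κ by positivity)
  calc κ ^ 2 * Real.exp (11 / 10 * (δ * κ) * Real.log (min κ δ⁻¹) + 2 * (κ * (min κ δ⁻¹)⁻¹))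
      ≤ κ ^ 2 * Real.exp (2 + (5 * δ * Real.log (5 * δ)⁻¹ * κ + 2 * (δ * κ))) :=
        mul_le_mul_of_nonneg_left (Real.exp_le_exp.2 (by linarith)) (by positivity)
    _ ≤ κ ^ 2 * (9 * (Real.exp (5 * δ * Real.log (5 * δ)⁻¹ * κ) * Real.exp (2 * (δ * κ)))) := by
        rw [Real.exp_add, Real.exp_add]
        gcongr
    _ = _ := by ring

theorem exp_mul_log_inv_le_two_rpow_binEnt {x κ : ℝ} (hx : 0 ≤ x) (hx1 : x ≤ 1) (hκ : 0 ≤ κ) :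
    Real.exp (x * Real.log x⁻¹ * κ) ≤ 2 ^ (binEnt x * κ) := by
  have hlog : 0 ≤ -((1 - x) * Real.log (1 - x)) := by
    rw [neg_mul_eq_mul_neg]
    exact mul_nonneg (by linarith) (neg_nonneg.2 (Real.log_nonpos (by linarith) (by linarith)))
  have hlog_two : Real.log 2 ≠ 0 := (Real.log_pos one_lt_two).ne'
  have hent : Real.log 2 * binEnt x = x * Real.log x⁻¹ - (1 - x) * Real.log (1 - x) := by
    rw [binEnt, Real.logb, Real.logb, Real.log_inv]
    field_simp
  rw [Real.rpow_def_of_pos two_pos, ← mul_assoc, hent]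
  gcongr
  linarith

theorem exp_le_natCast_rpow {d : ℕ} (hd : 3 ≤ d) {t : ℝ} (ht : 0 ≤ t) :
    Real.exp t ≤ (d : ℝ) ^ t := by
  have hd' : (3 : ℝ) ≤ d := by exact_mod_cast hd
  calc Real.exp t = Real.exp 1 ^ t := by rw [← Real.exp_mul, one_mul]
    _ ≤ (d : ℝ) ^ t := by
        gcongr
        linarith [Real.exp_one_lt_three]

theorem three_mul_pow_mul_self_le {κ r : ℝ} {q : ℕ} (hκ : 1 ≤ κ) (hr : 3 ≤ r) (hq : q ≤ κ / r) :
    (3 * κ) ^ q * (3 * κ) ^ q ≤ (r * κ) ^ (2 * κ / r) := by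
  calc (3 * κ) ^ q * (3 * κ) ^ q ≤ (r * κ) ^ q * (r * κ) ^ q := by gcongr
    _ = (r * κ) ^ ((q + q : ℕ) : ℝ) := by rw [← pow_add, Real.rpow_natCast]
    _ ≤ (r * κ) ^ (2 * κ / r) := by
        refine Real.rpow_le_rpow_of_exponent_le (by nlinarith) ?_
        push_cast
        rw [mul_div_assoc]
        linarith

theorem four_mul_sub_one_pow_le {d m : ℕ} (hd : 3 ≤ d) (hm : m ≠ 0) :
    4 * ((d : ℝ) - 1) ^ (m - 1) ≤ (d - 1) ^ (m + 1) := by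
  have hd' : (2 : ℝ) ≤ d - 1 := by
    have : (3 : ℝ) ≤ d := by exact_mod_cast hd
    linarith
  obtain ⟨j, rfl⟩ := Nat.exists_eq_succ_of_ne_zero hm
  rw [Nat.succ_sub_one, show j.succ + 1 = 2 + j by omega, pow_add]
  gcongr
  nlinarith

theorem mul_rpow_mul_pow_le_two_rpow_mul_sqrt_pow {A B D E h δ r : ℝ} {k : ℕ} (hB : 0 < B)
    (hD : 0 < D) (hE : 0 ≤ E) (hk : k ≠ 0) :
    A * B ^ (2 * k / r) * (2 ^ (h * k) * D ^ (2 * (δ * k))) * E ^ k ≤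
      (2 ^ (Real.logb 2 A / (2 * k) + Real.logb 2 B / r + h / 2 + δ * Real.logb 2 D) *
        √E) ^ (2 * k) := by
  have two_rpow {x : ℝ} (hx : 0 < x) (t : ℝ) : x ^ t = 2 ^ (Real.logb 2 x * t) := by
    rw [Real.rpow_mul two_pos.le, Real.rpow_logb two_pos (by norm_num) hx]
  have hA : A ≤ 2 ^ Real.logb 2 A := by
    obtain hneg | hpos := le_or_gt A 0
    · exact hneg.trans (by positivity)
    · exact (Real.rpow_logb two_pos (by norm_num) hpos).ge
  rw [mul_pow, pow_mul √E, Real.sq_sqrt hE]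
  gcongr
  calc A * B ^ (2 * k / r) * (2 ^ (h * k) * D ^ (2 * (δ * k)))
      ≤ 2 ^ Real.logb 2 A * B ^ (2 * k / r) * (2 ^ (h * k) * D ^ (2 * (δ * k))) := by gcongr
    _ = _ := by
      rw [two_rpow hB, two_rpow hD, ← Real.rpow_add two_pos, ← Real.rpow_add two_pos,
        ← Real.rpow_add two_pos, ← Real.rpow_natCast, ← Real.rpow_mul two_pos.le]
      congr 1
      push_cast
      field_simp
      ring

theorem exists_pow_excessBound_mul_le {d r m : ℕ} {δ : ℝ} (hd : 3 ≤ d) (hδ : 0 < δ)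
    (hδ1 : δ ≤ 1 / 10) (hm : 2 ≤ m) (hr : 11 ≤ r) (hk : Real.log (m + 1) ≤ δ * r) :
    ∃ X : ℝ, 1 ≤ X ∧ X ^ (excessBound m r + 2) * (1 + X⁻¹) ^ (2 * m) ≤
      9 * (m + 1) ^ 2 * (2 ^ (binEnt (5 * δ) * (m + 1)) * d ^ (2 * (δ * (m + 1)))) := by
  obtain ⟨X, hX, hbound⟩ := exists_pow_add_two_mul_one_add_inv_pow_le hδ hδ1
    (by simp : (1 : ℝ) ≤ m + 1) (excessBound_le hδ.le hm hr hk) (by simp : (m : ℝ) ≤ m + 1)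
  refine ⟨X, hX, hbound.trans ?_⟩
  gcongr
  · exact exp_mul_log_inv_le_two_rpow_binEnt (by linarith) (by linarith) (by positivity)
  · exact exp_le_natCast_rpow hd (by positivity)

theorem exists_hikeBound_le {n d r m q : ℕ} {δ : ℝ} (hd : 3 ≤ d) (hδ : 0 < δ)
    (hδ1 : δ ≤ 1 / 10) (hm : 2 ≤ m) (hr : 11 ≤ r) (hk : Real.log (m + 1) ≤ δ * r)
    (hq : q ≤ (m + 1) / (r : ℝ)) :
    ∃ X : ℝ, 1 ≤ X ∧ (3 * (3 * ((m : ℝ) + 1)) ^ q) * (3 * (3 * (m + 1)) ^ q) * (m + 1) *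
      (n * (d * ((d - 1) ^ (m - 1) * X ^ (excessBound m r + 2) * (1 + X⁻¹) ^ (2 * m)))) ≤
      (16 * n * (m + 1) ^ 3 * r * d) * (r * (m + 1)) ^ (2 * (m + 1) / r : ℝ) *
        (2 ^ (binEnt (5 * δ) * (m + 1)) * d ^ (2 * (δ * (m + 1)))) * (d - 1) ^ (m + 1) := by
  have hr' : (11 : ℝ) ≤ r := by exact_mod_cast hr
  have hd' : (0 : ℝ) ≤ d - 1 := by
    have : (3 : ℝ) ≤ d := by exact_mod_cast hd
    linarith
  have hpieces := three_mul_pow_mul_self_le (by simp : (1 : ℝ) ≤ m + 1) (by linarith) hq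
  have hdegree := four_mul_sub_one_pow_le hd (m := m) (by omega)
  obtain ⟨X, hX, hbound⟩ := exists_pow_excessBound_mul_le hd hδ hδ1 hm hr hk
  refine ⟨X, hX, ?_⟩
  set κ : ℝ := m + 1
  set W : ℝ := 2 ^ (binEnt (5 * δ) * κ) * d ^ (2 * (δ * κ))
  calc _ = (3 * κ) ^ q * (3 * κ) ^ q * (κ * n * d) * (d - 1 : ℝ) ^ (m - 1) *
        (9 * (X ^ (excessBound m r + 2) * (1 + X⁻¹) ^ (2 * m))) := by ring
    _ ≤ (r * κ) ^ (2 * κ / r) * (κ * n * d) * (d - 1 : ℝ) ^ (m - 1) * (9 * (9 * κ ^ 2 * W)) := by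
        gcongr
    _ = 81 * (n * κ ^ 3 * d * (r * κ) ^ (2 * κ / r) * W * (d - 1 : ℝ) ^ (m - 1)) := by ring
    _ ≤ 64 * r * (n * κ ^ 3 * d * (r * κ) ^ (2 * κ / r) * W * (d - 1 : ℝ) ^ (m - 1)) := by
        gcongr
        linarith
    _ = 16 * n * κ ^ 3 * r * d * (r * κ) ^ (2 * κ / r) * W * (4 * (d - 1 : ℝ) ^ (m - 1)) := by
        ring
    _ ≤ _ := by gcongr

theorem pos_and_eleven_le_of_log_le {k r : ℕ} {δ : ℝ} (hδ1 : δ ≤ 1 / 10) (hk3 : 3 ≤ k)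
    (hk : Real.log k ≤ δ * r) : 0 < δ ∧ 11 ≤ r := by
  have hk3' : (3 : ℝ) ≤ k := by exact_mod_cast hk3
  have hlog : 1 < Real.log k := by
    rw [Real.lt_log_iff_exp_lt (by linarith)]
    linarith [Real.exp_one_lt_three]
  have hr : (10 : ℝ) < r := by
    have : δ * r ≤ 1 / 10 * r := by gcongr
    linarith
  exact ⟨pos_of_mul_pos_left (by linarith) r.cast_nonneg, by exact_mod_cast hr⟩

end Numerics

theorem stmt10_general {V : Type*} [Fintype V] [DecidableEq V] {d r k : ℕ} (hd : 3 ≤ d) {δ : ℝ}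
    (hδ1 : δ ≤ 1 / 10) (G : SimpleGraph V) [G.LocallyFinite] (hdeg : ∀ v, G.degree v ≤ d)
    (hbf : BicycleFree G r) (hk3 : 3 ≤ k) (hk : (k : ℝ) ≤ Real.exp (δ * r)) :
    ({f : Fin (2 * (k - 1) + 1) → V |
        IsHike G (k - 1) f ∧ IsSingletonFree (k - 1) f}.ncard : ℝ)
      ≤ ((2 : ℝ) ^ (Real.logb 2 (16 * (Fintype.card V : ℝ) * k ^ 3 * r * d) / (2 * k)
            + Real.logb 2 ((r : ℝ) * k) / r + binEnt (5 * δ) / 2 + δ * Real.logb 2 d)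
          * Real.sqrt ((d : ℝ) - 1)) ^ (2 * k) := by
  have hlog : Real.log k ≤ δ * r := (Real.log_le_iff_le_exp (by positivity)).2 hk
  obtain ⟨hδ, hr⟩ := pos_and_eleven_le_of_log_le hδ1 hk3 hlog
  have hd' : (3 : ℝ) ≤ d := by exact_mod_cast hd
  obtain ⟨m, rfl⟩ : ∃ m, k = m + 1 := ⟨k - 1, by omega⟩
  rw [Nat.add_sub_cancel, Set.ncard_eq_toFinset_card']
  refine le_trans ?_ (mul_rpow_mul_pow_le_two_rpow_mul_sqrt_pow (by positivity) (by positivity)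
    (by linarith) m.succ_ne_zero)
  push_cast at hlog ⊢
  have hq : m ≤ (m / r + 1) * r := (Nat.lt_mul_of_div_lt (Nat.lt_succ_self _) (by omega)).le
  obtain ⟨X, hX, hbound⟩ := exists_hikeBound_le (n := Fintype.card V) (q := m / r) hd hδ hδ1
    (by omega) hr hlog (Nat.cast_div_le.trans (by gcongr; simp))
  refine (hbf.card_isHike_of_card_hikeEdges_le (by omega) hdeg (by omega) (by omega) hq hX
    (fun f hf => ?_) fun f hf => ?_).trans hbound
  · exact (Set.mem_toFinset.1 hf).1
  · exact (Set.mem_toFinset.1 hf).2.card_hikeEdges_le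

/-- Second counting bound for singleton-free `(k-1)`-hikes in a `d`-regular graph that is
bicycle-free at radius `r`, in the regime `3 ≤ k ≤ e^(δr)`. -/
theorem stmt10 {n d r k : ℕ} (hd : 3 ≤ d) {δ : ℝ} (hδ0 : 0 < δ) (hδ1 : δ ≤ 1 / 10)
    (G : SimpleGraph (Fin n)) (hreg : G.IsRegularOfDegree d) (hbf : BicycleFree G r)
    (hk3 : 3 ≤ k) (hk : (k : ℝ) ≤ Real.exp (δ * r)) :
    ({f : Fin (2 * (k - 1) + 1) → Fin n |
        IsHike G (k - 1) f ∧ IsSingletonFree (k - 1) f}.ncard : ℝ)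
      ≤ ((2 : ℝ) ^ (Real.logb 2 (16 * (n : ℝ) * k ^ 3 * r * d) / (2 * k)
            + Real.logb 2 ((r : ℝ) * k) / r + binEnt (5 * δ) / 2 + δ * Real.logb 2 d)
          * Real.sqrt ((d : ℝ) - 1)) ^ (2 * k) := by
  have hcount := stmt10_general hd hδ1 G (fun v => (hreg v).le) hbf hk3 hk
  rwa [Fintype.card_fin] at hcount
end
end

section
/- Every singleton-free k-hike in a graph G traverses at most k distinct edges of G, and its hike graph is a connected subgraph of G that has at most two vertices of degree one. -/
open scoped Classical

noncomputable section

/-- The hike graph of a hike: the subgraph of `G` consisting of the traversed vertices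
and edges. -/
def hikeGraph {V : Type*} (G : SimpleGraph V) (k : ℕ) (f : Fin (2 * k + 1) → V)
    (hf : IsHike G k f) : G.Subgraph where
  verts := Set.range f
  Adj a b := ∃ (i : ℕ) (h : i < 2 * k),
    (f ⟨i, by omega⟩ = a ∧ f ⟨i + 1, by omega⟩ = b) ∨
    (f ⟨i, by omega⟩ = b ∧ f ⟨i + 1, by omega⟩ = a)
  adj_sub := by
    rintro a b ⟨i, h, hcase⟩
    rcases hcase with ⟨ha, hb⟩ | ⟨ha, hb⟩
    · rw [← ha, ← hb]; exact hf.1 i h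
    · rw [← ha, ← hb]; exact (hf.1 i h).symm
  edge_vert := by
    rintro a b ⟨i, h, hcase⟩
    rcases hcase with ⟨ha, _⟩ | ⟨_, hb⟩
    · exact ⟨_, ha⟩
    · exact ⟨_, hb⟩
  symm := by
    constructor
    rintro a b ⟨i, h, hcase⟩
    exact ⟨i, h, hcase.symm⟩

/-!
Every traversed edge is traversed at least twice and there are only `2k` steps, so at most `k`
distinct edges occur. The hike is a surjective homomorphism from a path graph onto its hike graph,
which is therefore connected. Finally, at a time `i ∉ {0, k, 2k}` the hike does not backtrack, so
the vertex visited at that time has two distinct neighbours; hence only `v₀ = v₂ₖ` and `vₖ` can have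
degree one.
-/

section EdgeCount

variable {V : Type*}

/-- The undirected edge traversed by the `i`-th step (counting from `0`) of a vertex sequence of
length `n`. -/
def stepEdge {n : ℕ} (f : Fin (n + 1) → V) (i : Fin n) : Sym2 V :=
  s(f i.castSucc, f i.succ)

variable [DecidableEq V] {k : ℕ} {f : Fin (2 * k + 1) → V}

lemma edgeCount_eq_card_filter_stepEdge (e : Sym2 V) :
    edgeCount k f e = (Finset.univ.filter fun i => stepEdge f i = e).card :=
  rfl

lemma edgeCount_pos_iff_mem_image_stepEdge {e : Sym2 V} :
    0 < edgeCount k f e ↔ e ∈ Finset.univ.image (stepEdge f) := by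
  simp [edgeCount_eq_card_filter_stepEdge, Finset.card_pos, Finset.filter_nonempty_iff]

lemma IsSingletonFree.two_le_edgeCount (hsf : IsSingletonFree k f) {e : Sym2 V}
    (he : 0 < edgeCount k f e) : 2 ≤ edgeCount k f e := by
  have := hsf e
  omega

lemma IsSingletonFree.ncard_setOf_edgeCount_pos_le (hsf : IsSingletonFree k f) :
    {e : Sym2 V | 0 < edgeCount k f e}.ncard ≤ k := by
  have traversed_eq : {e : Sym2 V | 0 < edgeCount k f e} = Finset.univ.image (stepEdge f) :=
    Set.ext fun _ => edgeCount_pos_iff_mem_image_stepEdge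
  have two_mul_card_le : 2 * (Finset.univ.image (stepEdge f)).card ≤ 2 * k := by
    simpa using Finset.mul_card_image_le_card (s := Finset.univ) (f := stepEdge f) 2 fun e he =>
      hsf.two_le_edgeCount (edgeCount_pos_iff_mem_image_stepEdge.2 he)
  rw [traversed_eq, Set.ncard_coe_finset]
  omega

end EdgeCount

section HikeGraph

variable {V : Type*} {G : SimpleGraph V} {k : ℕ} {f : Fin (2 * k + 1) → V}

lemma hikeGraph_adj_succ (hf : IsHike G k f) {i : ℕ} (hi : i < 2 * k) :
    (hikeGraph G k f hf).Adj (f ⟨i, by omega⟩) (f ⟨i + 1, by omega⟩) :=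
  ⟨i, hi, Or.inl ⟨rfl, rfl⟩⟩

/-- A hike as a homomorphism from the path graph on its `2k + 1` times to its hike graph. -/
def pathGraphHomToHikeGraph (hf : IsHike G k f) :
    SimpleGraph.pathGraph (2 * k + 1) →g (hikeGraph G k f hf).coe where
  toFun := Set.rangeFactorization f
  map_rel' {a b} hab := by
    obtain ⟨i, hi⟩ := a
    obtain ⟨j, hj⟩ := b
    rcases SimpleGraph.pathGraph_adj.1 hab with rfl | rfl
    · exact hikeGraph_adj_succ hf (Nat.succ_lt_succ_iff.1 hj)
    · exact (hikeGraph_adj_succ hf (Nat.succ_lt_succ_iff.1 hi)).symm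

lemma hikeGraph_connected (hf : IsHike G k f) : (hikeGraph G k f hf).Connected :=
  ⟨(SimpleGraph.pathGraph_connected (2 * k)).map (pathGraphHomToHikeGraph hf)
    Set.rangeFactorization_surjective⟩

lemma hikeGraph_neighborSet_nontrivial (hf : IsHike G k f) {i : ℕ} (hi : i + 1 < 2 * k)
    (hik : i + 1 ≠ k) :
    ((hikeGraph G k f hf).neighborSet (f ⟨i + 1, by omega⟩)).Nontrivial :=
  ⟨f ⟨i + 2, by omega⟩, hikeGraph_adj_succ hf hi,
    f ⟨i, by omega⟩, (hikeGraph_adj_succ hf (by omega)).symm,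
    hf.2.2 (i + 1) (by omega) hi hik⟩

lemma hikeGraph_degreeOne_verts_subset (hf : IsHike G k f) :
    {v ∈ (hikeGraph G k f hf).verts | ((hikeGraph G k f hf).neighborSet v).ncard = 1} ⊆
      {f ⟨0, by omega⟩, f ⟨k, by omega⟩} := by
  rintro _ ⟨⟨⟨i, hi⟩, rfl⟩, degree_eq_one⟩
  rcases i with - | j
  · exact Or.inl rfl
  obtain rfl | hlast | ⟨hj, hjk⟩ : j + 1 = k ∨ j + 1 = 2 * k ∨ j + 1 < 2 * k ∧ j + 1 ≠ k := by
    omega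
  · exact Or.inr rfl
  · exact Or.inl (by simpa only [hlast] using hf.2.1)
  · obtain ⟨w, neighborSet_eq⟩ := Set.ncard_eq_one.1 degree_eq_one
    exact absurd neighborSet_eq (hikeGraph_neighborSet_nontrivial hf hj hjk).ne_singleton

lemma hikeGraph_ncard_degreeOne_verts_le_two (hf : IsHike G k f) :
    {v ∈ (hikeGraph G k f hf).verts |
      ((hikeGraph G k f hf).neighborSet v).ncard = 1}.ncard ≤ 2 :=
  (Set.ncard_le_ncard (hikeGraph_degreeOne_verts_subset hf)).trans
    ((Set.ncard_insert_le _ _).trans_eq (by rw [Set.ncard_singleton]))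

end HikeGraph

theorem stmt11_general {V : Type*} [DecidableEq V] (G : SimpleGraph V) (k : ℕ)
    (f : Fin (2 * k + 1) → V) (hf : IsHike G k f) (hsf : IsSingletonFree k f) :
    {e : Sym2 V | 0 < edgeCount k f e}.ncard ≤ k ∧
    (hikeGraph G k f hf).Connected ∧
    {v ∈ (hikeGraph G k f hf).verts |
      ((hikeGraph G k f hf).neighborSet v).ncard = 1}.ncard ≤ 2 :=
  ⟨hsf.ncard_setOf_edgeCount_pos_le, hikeGraph_connected hf,
    hikeGraph_ncard_degreeOne_verts_le_two hf⟩

/-- A singleton-free `k`-hike traverses at most `k` distinct edges, and its hike graph is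
a connected subgraph with at most two vertices of degree one. -/
theorem stmt11 {V : Type*} [Fintype V] [DecidableEq V] (G : SimpleGraph V) (k : ℕ)
    (f : Fin (2 * k + 1) → V) (hf : IsHike G k f) (hsf : IsSingletonFree k f) :
    {e : Sym2 V | 0 < edgeCount k f e}.ncard ≤ k ∧
    (hikeGraph G k f hf).Connected ∧
    {v ∈ (hikeGraph G k f hf).verts |
      ((hikeGraph G k f hf).neighborSet v).ncard = 1}.ncard ≤ 2 :=
  stmt11_general G k f hf hsf
end
end

section
/- Let G be a finite graph with edge set E (each edge carrying a fixed orientation), let H be a finite abelian group, and let D be a ν-biased distribution on the product group H^E. Let χ : H → ℂ* be a nontrivial character of H, and let w = (e₁, …, e_{k−1}, e_{k+1}, …, e_{2k−1}) be the sequence of directed edges of a (k−1)-hike in G such that some undirected edge of G is traversed (in either orientation) exactly once among these steps. For a signing s : E → H, extended to directed edges by s(v,u) = s(u,v)^{−1}, define χ_w(s) = ∏_{i=1}^{k−1} χ(s(e_i)) · ∏_{i=k+1}^{2k−1} χ(s(e_i))^{−1}. Then |E_{s∼D}[χ_w(s)]| ≤ ν. -/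
open scoped Classical

noncomputable section

/-- The oriented edges of `G`: each undirected edge `{u,v}` is oriented as `(u,v)`
with `u < v`. -/
def OEdge {n : ℕ} (G : SimpleGraph (Fin n)) : Type :=
  {p : Fin n × Fin n // G.Adj p.1 p.2 ∧ p.1 < p.2}

instance {n : ℕ} (G : SimpleGraph (Fin n)) : Fintype (OEdge G) :=
  Subtype.fintype _

instance {n : ℕ} (G : SimpleGraph (Fin n)) : DecidableEq (OEdge G) :=
  Classical.decEq _

/-- The extension of a signing `sg` on oriented edges to all directed edges, via
`s(v,u) = s(u,v)⁻¹`. -/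
def sHat {n : ℕ} {H : Type*} [Group H] (G : SimpleGraph (Fin n))
    (sg : OEdge G → H) (u v : Fin n) : H :=
  if h : G.Adj u v ∧ u < v then sg ⟨(u, v), h⟩
  else if h : G.Adj v u ∧ v < u then (sg ⟨(v, u), h⟩)⁻¹
  else 1

/-!
The function `χ_w` is a product of characters of `H^E`, one for each step, so by `ν`-biasedness it
is enough that it is nontrivial. Evaluate it at the signing that is `h` on the edge traversed
exactly once and `1` elsewhere: only one factor survives, and it is `χ h` or its inverse. Choosing
`h` with `χ h ≠ 1` gives the claim.
-/

/-- The undirected edge underlying an oriented edge, for comparison with the steps of a hike. -/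
def OEdge.edge {n : ℕ} {G : SimpleGraph (Fin n)} (o : OEdge G) : Sym2 (Fin n) :=
  s(o.1.1, o.1.2)

theorem OEdge.exists_edge_eq {n : ℕ} {G : SimpleGraph (Fin n)} (d : G.Dart) :
    ∃ o : OEdge G, o.edge = d.edge := by
  rcases d.adj.ne.lt_or_gt with hlt | hgt
  · exact ⟨⟨(d.fst, d.snd), d.adj, hlt⟩, rfl⟩
  · exact ⟨⟨(d.snd, d.fst), d.adj.symm, hgt⟩, Sym2.eq_swap⟩

section Signing

variable {n : ℕ} {G : SimpleGraph (Fin n)} {H : Type*}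

theorem sHat_fst_snd [Group H] (sg : OEdge G → H) (o : OEdge G) :
    sHat G sg o.1.1 o.1.2 = sg o :=
  dif_pos o.2

theorem sHat_snd_fst [Group H] (sg : OEdge G → H) (o : OEdge G) :
    sHat G sg o.1.2 o.1.1 = (sg o)⁻¹ := by
  rw [sHat, dif_neg fun hgt => hgt.2.asymm o.2.2, dif_pos o.2]
  rfl

theorem sHat_mulSingle_of_edge_ne [Group H] {o : OEdge G} {u v : Fin n} (hne : s(u, v) ≠ o.edge)
    (h : H) : sHat G (Pi.mulSingle o h) u v = 1 := by
  have eval_eq_one (o' : OEdge G) (ho' : o'.edge = s(u, v)) :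
      (Pi.mulSingle o h : OEdge G → H) o' = 1 := by
    refine Pi.mulSingle_eq_of_ne (M := fun _ => H) (fun heq => hne ?_) h
    rw [← ho', heq]
  unfold sHat
  split_ifs
  · exact eval_eq_one _ rfl
  · exact inv_eq_one.mpr (eval_eq_one _ Sym2.eq_swap)
  · rfl

theorem sHat_mulSingle_of_edge_eq [Group H] {o : OEdge G} {u v : Fin n} (heq : s(u, v) = o.edge)
    (h : H) :
    sHat G (Pi.mulSingle o h) u v = h ∨ sHat G (Pi.mulSingle o h) u v = h⁻¹ := by
  rcases Sym2.eq_iff.mp heq with ⟨rfl, rfl⟩ | ⟨rfl, rfl⟩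
  · left
    rw [sHat_fst_snd, Pi.mulSingle_eq_same]
  · right
    rw [sHat_snd_fst, Pi.mulSingle_eq_same]

variable [CommGroup H]

/-- Evaluation of the extended signing `sHat` at the pair `(u, v)`, as a group homomorphism in the
signing. -/
def sHatHom (G : SimpleGraph (Fin n)) (u v : Fin n) : (OEdge G → H) →* H where
  toFun sg := sHat G sg u v
  map_one' := by
    unfold sHat
    split_ifs
    exacts [rfl, inv_one, rfl]
  map_mul' a b := by
    unfold sHat
    split_ifs
    exacts [rfl, mul_inv _ _, (one_mul 1).symm]

variable {ι M : Type*} [Fintype ι] [CommMonoid M]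

/-- The homomorphism `s ↦ ∏ᵢ χᵢ(s(dᵢ))` on signings attached to a family of directed edges `dᵢ` and
characters `χᵢ`. The paper's `χ_w` has `χᵢ = χ` on the first half of the hike and `χᵢ = χ⁻¹` on the
second. -/
def dartsCharacter (χ : ι → H →* M) (d : ι → G.Dart) : (OEdge G → H) →* M :=
  ∏ i, (χ i).comp (sHatHom G (d i).fst (d i).snd)

theorem dartsCharacter_apply (χ : ι → H →* M) (d : ι → G.Dart) (sg : OEdge G → H) :
    dartsCharacter χ d sg = ∏ i, χ i (sHat G sg (d i).fst (d i).snd) := by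
  rw [dartsCharacter, MonoidHom.finsetProd_apply]
  rfl

theorem dartsCharacter_mulSingle (χ : ι → H →* M) {d : ι → G.Dart} {i₀ : ι}
    (honce : ∀ i, (d i).edge = (d i₀).edge → i = i₀) {o : OEdge G} (ho : o.edge = (d i₀).edge)
    (h : H) :
    dartsCharacter χ d (Pi.mulSingle o h) =
      χ i₀ (sHat G (Pi.mulSingle o h) (d i₀).fst (d i₀).snd) := by
  rw [dartsCharacter_apply]
  refine Fintype.prod_eq_single i₀ fun i hi => ?_
  have hne : (d i).edge ≠ o.edge := fun heq => hi (honce i (heq.trans ho))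
  rw [sHat_mulSingle_of_edge_ne hne, map_one]

theorem dartsCharacter_ne_one {χ : ι → H →* M} {d : ι → G.Dart} {i₀ : ι} (hχ : χ i₀ ≠ 1)
    (honce : ∀ i, (d i).edge = (d i₀).edge → i = i₀) : dartsCharacter χ d ≠ 1 := by
  obtain ⟨h, hh⟩ := DFunLike.ne_iff.mp hχ
  obtain ⟨o, ho⟩ := OEdge.exists_edge_eq (d i₀)
  refine DFunLike.ne_iff.mpr ⟨Pi.mulSingle o h, ?_⟩
  rw [dartsCharacter_mulSingle χ honce ho]
  rcases sHat_mulSingle_of_edge_eq ho.symm h with heval | heval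
  · rwa [heval]
  · rw [heval]
    exact fun hinv => hh ((χ i₀).ker.inv_mem_iff.mp hinv)

end Signing

theorem invMonoidHom_comp_ne_one {H M : Type*} [MulOneClass H] [DivisionCommMonoid M] {χ : H →* M}
    (hχ : χ ≠ 1) : invMonoidHom.comp χ ≠ 1 := by
  obtain ⟨h, hh⟩ := DFunLike.ne_iff.mp hχ
  exact DFunLike.ne_iff.mpr ⟨h, inv_ne_one.mpr hh⟩

/-- The directed edge traversed at step `i` of a hike, with steps indexed from `0`. -/
def IsHike.dart {V : Type*} {G : SimpleGraph V} {k : ℕ} {f : Fin (2 * k + 1) → V}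
    (hf : IsHike G k f) (i : Fin (2 * k)) : G.Dart :=
  ⟨(f i.castSucc, f i.succ), hf.1 i i.2⟩

theorem IsHike.existsUnique_dart_edge_eq {V : Type*} [DecidableEq V] {G : SimpleGraph V} {k : ℕ}
    {f : Fin (2 * k + 1) → V} (hf : IsHike G k f) {e : Sym2 V} (he : edgeCount k f e = 1) :
    ∃! i, (hf.dart i).edge = e :=
  Fintype.existsUnique_iff_card_one _ |>.mpr he

theorem stmt12_general {n : ℕ} (G : SimpleGraph (Fin n)) {H : Type*} [CommGroup H] [Fintype H]
    (ν : ℝ) (D : (OEdge G → H) → ℂ)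
    (hbias : ∀ ψ : (OEdge G → H) →* ℂ, ψ ≠ 1 → ‖∑ x, D x * ψ x‖ ≤ ν)
    {ι : Type*} [Fintype ι] (χ : ι → H →* ℂ) (d : ι → G.Dart) (i₀ : ι) (hχ : χ i₀ ≠ 1)
    (honce : ∀ i, (d i).edge = (d i₀).edge → i = i₀) :
    ‖∑ sg, D sg * ∏ i, χ i (sHat G sg (d i).fst (d i).snd)‖ ≤ ν := by
  simpa only [dartsCharacter_apply] using hbias _ (dartsCharacter_ne_one hχ honce)

/-- For a `(k-1)`-hike with an edge traversed exactly once, the expectation of the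
character `χ_w` under a `ν`-biased distribution is at most `ν` in absolute value. -/
theorem stmt12 {n k : ℕ} (hk : 1 ≤ k) (G : SimpleGraph (Fin n))
    {H : Type*} [CommGroup H] [Fintype H]
    (ν : ℝ) (D : (OEdge G → H) → ℝ) (hD0 : ∀ x, 0 ≤ D x) (hD1 : ∑ x, D x = 1)
    (hbias : ∀ ψ : (OEdge G → H) →* ℂ, ψ ≠ 1 →
      ‖∑ x, (D x : ℂ) * ψ x‖ ≤ ν)
    (χ : H →* ℂ) (hχ : χ ≠ 1)
    (f : Fin (2 * (k - 1) + 1) → Fin n) (hf : IsHike G (k - 1) f)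
    (hsingle : ∃ e : Sym2 (Fin n), edgeCount (k - 1) f e = 1) :
    ‖∑ sg : OEdge G → H, (D sg : ℂ) *
        ∏ i : Fin (2 * (k - 1)),
          (if (i : ℕ) < k - 1 then χ (sHat G sg (f i.castSucc) (f i.succ))
           else (χ (sHat G sg (f i.castSucc) (f i.succ)))⁻¹)‖ ≤ ν := by
  obtain ⟨e, he⟩ := hsingle
  obtain ⟨i₀, rfl, honce⟩ := hf.existsUnique_dart_edge_eq he
  let χ' (i : Fin (2 * (k - 1))) : H →* ℂ := if (i : ℕ) < k - 1 then χ else invMonoidHom.comp χ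
  have hχ' : χ' i₀ ≠ 1 := by
    unfold χ'
    split_ifs
    exacts [hχ, invMonoidHom_comp_ne_one hχ]
  convert stmt12_general G ν (fun sg => (D sg : ℂ)) hbias χ' hf.dart i₀ hχ' honce
    using 6 with sg _ i
  simp only [χ']
  split_ifs <;> rfl
end
end

section
/- Let G be a d-regular graph on n vertices with edge set E, let ε ∈ (0,1), let ℓ ≥ 1, let H ≤ Sym(ℓ) be an abelian group, and let D be a ν-biased distribution on the product group H^E with ν ≤ (nℓd²)^{−1}·(ε/d)^{2k}. Assume that the number of singleton-free (k−1)-hikes in G is at most (2^γ·√(d−1))^{2k}. Then for every nontrivial character χ of H, with probability at least 1 − 1/ℓ over s ∼ D, the spectral radius of the signed non-backtracking matrix satisfies ρ(B_s(χ)) ≤ 2^{γ'}·√(d−1) + ε, where γ' = γ + log₂(ℓ·d²)/(2k). -/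
open scoped Classical

noncomputable section

/-- The directed edges of `G`. -/
def DEdge {n : ℕ} (G : SimpleGraph (Fin n)) : Type :=
  {p : Fin n × Fin n // G.Adj p.1 p.2}

instance {n : ℕ} (G : SimpleGraph (Fin n)) : Fintype (DEdge G) :=
  Subtype.fintype _

instance {n : ℕ} (G : SimpleGraph (Fin n)) : DecidableEq (DEdge G) :=
  Classical.decEq _

/-- The signed non-backtracking matrix `B_s(χ)` of `G` with respect to the signing `sg`
and the character `χ`. -/
def Bmat {n : ℕ} {H : Type*} [Group H] (G : SimpleGraph (Fin n))
    (sg : OEdge G → H) (χ : H →* ℂ) : Matrix (DEdge G) (DEdge G) ℂ :=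
  fun p q => if p.val.2 = q.val.1 ∧ p.val.1 ≠ q.val.2
    then χ (sHat G sg q.val.1 q.val.2) else 0

/-!
The trace method. If `μ` is an eigenvalue of `B = B_s(χ)`, then `‖μ‖ ^ (2k)` is at most the squared
Frobenius norm of `B ^ k`. That norm is a sum over pairs of non-backtracking walks with the same
first and the same last directed edge. Going along one and back along the other, without the two
outer edges, gives a `(k - 1)`-hike; each hike arises from at most `d²` pairs, and the summand is
the value at `s` of the character of `H^E` given by the sign of the hike. If some edge is traversed
exactly once, this character is nontrivial and its expectation has modulus at most `ν`. So only the
singleton-free hikes contribute substantially to the expectation, and Markov's inequality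
concludes.
-/

theorem sum_mul_sum_fiber {α κ R : Type*} [Fintype α] [Fintype κ] [DecidableEq κ] [CommSemiring R]
    (key : α → κ) (f g : α → R) :
    ∑ c, (∑ a with key a = c, f a) * (∑ b with key b = c, g b) =
      ∑ ab : α × α with key ab.1 = key ab.2, f ab.1 * g ab.2 := by
  simp only [Finset.sum_filter, Finset.sum_mul_sum, Fintype.sum_prod_type, ite_mul, mul_ite,
    zero_mul, mul_zero]
  rw [Finset.sum_comm]
  refine Finset.sum_congr rfl fun a _ => ?_
  rw [Finset.sum_comm]
  refine Finset.sum_congr rfl fun b _ => ?_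
  simp [eq_comm]

theorem mul_sum_filter_le_sum_mul {α : Type*} [Fintype α] {D F : α → ℝ} (hD : ∀ a, 0 ≤ D a)
    (hF : ∀ a, 0 ≤ F a) {p : α → Prop} [DecidablePred p] {c : ℝ}
    (hp : ∀ a, p a → c ≤ F a) :
    c * ∑ a with p a, D a ≤ ∑ a, D a * F a := by
  calc c * ∑ a with p a, D a = ∑ a with p a, D a * c := by
        rw [mul_comm, Finset.sum_mul]
    _ ≤ ∑ a with p a, D a * F a :=
        Finset.sum_le_sum fun a ha =>
          mul_le_mul_of_nonneg_left (hp a ((Finset.mem_filter_univ a).mp ha)) (hD a)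
    _ ≤ ∑ a, D a * F a :=
        Finset.sum_le_sum_of_subset_of_nonneg (Finset.filter_subset _ _)
          fun a _ _ => mul_nonneg (hD a) (hF a)

section FrobeniusNorm

open scoped Matrix.Norms.Frobenius

variable {ι : Type*}

/-- The weight `M (w 0) (w 1) * ⋯ * M (w (j - 1)) (w j)` of an index sequence `w`, viewed as a walk
of `j` steps in the complete digraph weighted by `M`. -/
def walkWeight {R : Type*} [CommMonoid R] (M : Matrix ι ι R) {j : ℕ} (w : Fin (j + 1) → ι) : R :=
  ∏ i : Fin j, M (w i.castSucc) (w i.succ)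

theorem walkWeight_cons {R : Type*} [CommMonoid R] (M : Matrix ι ι R) {j : ℕ} (p : ι)
    (w : Fin (j + 1) → ι) :
    walkWeight M (Fin.cons p w : Fin (j + 2) → ι) = M p (w 0) * walkWeight M w := by
  rw [walkWeight, Fin.prod_univ_succ]
  rfl

variable [Fintype ι]

theorem frobenius_norm_sq {𝕜 κ : Type*} [RCLike 𝕜] [Fintype κ] (M : Matrix ι κ 𝕜) :
    ((‖M‖ ^ 2 : ℝ) : 𝕜) = ∑ pq : ι × κ, M pq.1 pq.2 * starRingEnd 𝕜 (M pq.1 pq.2) := by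
  have hnorm : ‖M‖ ^ 2 = ∑ p, ∑ q, ‖M p q‖ ^ 2 := by
    rw [Matrix.frobenius_norm_def, ← Real.sqrt_eq_rpow, Real.sq_sqrt (by positivity)]
    simp only [Real.rpow_two]
  simp only [hnorm, RCLike.mul_conj, Fintype.sum_prod_type, RCLike.ofReal_sum, RCLike.ofReal_pow]

variable [DecidableEq ι]

theorem norm_le_frobenius_norm_of_mem_spectrum {𝕜 : Type*} [RCLike 𝕜] {M : Matrix ι ι 𝕜} {μ : 𝕜}
    (hμ : μ ∈ spectrum 𝕜 M) : ‖μ‖ ≤ ‖M‖ := by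
  rw [← Matrix.spectrum_toLin', ← Module.End.hasEigenvalue_iff_mem_spectrum] at hμ
  obtain ⟨v, hv⟩ := hμ.exists_hasEigenvector
  have hMv : M * Matrix.replicateCol Unit v = μ • Matrix.replicateCol Unit v := by
    rw [← Matrix.replicateCol_mulVec, ← Matrix.replicateCol_smul, ← Matrix.toLin'_apply,
      hv.apply_eq_smul]
  have hv_pos : 0 < ‖Matrix.replicateCol Unit v‖ := by
    rw [norm_pos_iff, Ne, Matrix.replicateCol_eq_zero]
    exact hv.2
  refine le_of_mul_le_mul_right ?_ hv_pos
  calc ‖μ‖ * ‖Matrix.replicateCol Unit v‖ = ‖M * Matrix.replicateCol Unit v‖ := by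
        rw [hMv, norm_smul]
    _ ≤ ‖M‖ * ‖Matrix.replicateCol Unit v‖ := Matrix.frobenius_norm_mul _ _

theorem pow_le_frobenius_norm_pow_sq_of_not_spectrum_le {𝕜 : Type*} [RCLike 𝕜]
    {M : Matrix ι ι 𝕜} {T : ℝ} (hT : 0 ≤ T) (h : ¬ ∀ μ ∈ spectrum 𝕜 M, ‖μ‖ ≤ T) (k : ℕ) :
    T ^ (2 * k) ≤ ‖M ^ k‖ ^ 2 := by
  push Not at h
  obtain ⟨μ, hμ, hTμ⟩ := h
  calc T ^ (2 * k) ≤ ‖μ‖ ^ (2 * k) := pow_le_pow_left₀ hT hTμ.le _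
    _ = ‖μ ^ k‖ ^ 2 := by rw [norm_pow, ← pow_mul, mul_comm]
    _ ≤ ‖M ^ k‖ ^ 2 :=
        pow_le_pow_left₀ (norm_nonneg _)
          (norm_le_frobenius_norm_of_mem_spectrum (spectrum.pow_mem_pow M k hμ)) 2

theorem pow_apply_eq_sum_walkWeight {R : Type*} [CommSemiring R] (M : Matrix ι ι R) (j : ℕ)
    (p q : ι) :
    (M ^ j) p q = ∑ w : Fin (j + 1) → ι with (w 0, w (Fin.last j)) = (p, q), walkWeight M w := by
  induction j generalizing p with
  | zero =>
    rw [Finset.sum_filter, ← (Equiv.funUnique (Fin 1) ι).symm.sum_comp]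
    simp [walkWeight, Matrix.one_apply, ite_and]
  | succ j ih =>
    calc (M ^ (j + 1)) p q
        = ∑ r, ∑ w : Fin (j + 1) → ι,
            if w 0 = r then if w (Fin.last j) = q then M p r * walkWeight M w else 0 else 0 := by
          simp only [pow_succ', Matrix.mul_apply, ih, Finset.mul_sum, Finset.sum_filter,
            Prod.mk.injEq, ite_and, mul_ite, mul_zero]
      _ = ∑ w : Fin (j + 1) → ι,
            if w (Fin.last j) = q then M p (w 0) * walkWeight M w else 0 := by
          rw [Finset.sum_comm]
          simp only [Finset.sum_ite_eq, Finset.mem_univ, if_true]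
      _ = ∑ r, ∑ w : Fin (j + 1) → ι, if r = p then
            if w (Fin.last j) = q then walkWeight M (Fin.cons r w : Fin (j + 2) → ι) else 0
            else 0 := by
          rw [Finset.sum_comm]
          simp only [Finset.sum_ite_eq', Finset.mem_univ, if_true, walkWeight_cons]
      _ = _ := by
          rw [Finset.sum_filter, ← (Fin.consEquiv fun _ => ι).sum_comp, Fintype.sum_prod_type]
          simp only [Fin.consEquiv_apply, ← Fin.succ_last, Fin.cons_succ, Fin.cons_zero,
            Prod.mk.injEq, ite_and]
          rfl

theorem frobenius_norm_pow_sq_eq_sum_walkWeight {𝕜 : Type*} [RCLike 𝕜] (M : Matrix ι ι 𝕜)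
    (j : ℕ) :
    ((‖M ^ j‖ ^ 2 : ℝ) : 𝕜) =
      ∑ ww : (Fin (j + 1) → ι) × (Fin (j + 1) → ι) with
        (ww.1 0, ww.1 (Fin.last j)) = (ww.2 0, ww.2 (Fin.last j)),
        walkWeight M ww.1 * starRingEnd 𝕜 (walkWeight M ww.2) := by
  simp only [frobenius_norm_sq, pow_apply_eq_sum_walkWeight, map_sum]
  exact sum_mul_sum_fiber (fun w : Fin (j + 1) → ι => (w 0, w (Fin.last j))) (walkWeight M)
    fun w => starRingEnd 𝕜 (walkWeight M w)

end FrobeniusNorm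

section Character

theorem conj_map_eq_map_inv {H : Type*} [Group H] [Finite H] (χ : H →* ℂ) (h : H) :
    starRingEnd ℂ (χ h) = χ h⁻¹ := by
  have hnorm : ‖χ h‖ = 1 := (χ.isOfFinOrder (isOfFinOrder_of_finite h)).norm_eq_one
  rw [← Complex.inv_eq_conj hnorm]
  refine inv_eq_of_mul_eq_one_right ?_
  rw [← map_mul, mul_inv_cancel, map_one]

/-- The density `D` on the finite group `A` has all its nontrivial Fourier coefficients bounded by
`ν`, i.e. it is `ν`-biased. -/
def IsBiased {A : Type*} [Group A] [Fintype A] (D : A → ℝ) (ν : ℝ) : Prop :=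
  ∀ ψ : A →* ℂ, ψ ≠ 1 → ‖∑ a, (D a : ℂ) * ψ a‖ ≤ ν

theorem IsBiased.norm_expectation_sum_le {A τ : Type*} [Group A] [Fintype A] {D : A → ℝ} {ν : ℝ}
    (hD : IsBiased D ν) (hD_sum : ∑ a, D a = 1) (hν : 0 ≤ ν) (T : Finset τ) (ψ : τ → A →* ℂ) :
    ‖∑ a, (D a : ℂ) * ∑ t ∈ T, ψ t a‖ ≤ ({t ∈ T | ψ t = 1}.card : ℝ) + T.card * ν := by
  have hterm (t : τ) : ‖∑ a, (D a : ℂ) * ψ t a‖ ≤ (if ψ t = 1 then 1 else 0) + ν := by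
    split_ifs with ht
    · simpa [ht, ← Complex.ofReal_sum, hD_sum] using hν
    · simpa using hD (ψ t) ht
  calc ‖∑ a, (D a : ℂ) * ∑ t ∈ T, ψ t a‖ = ‖∑ t ∈ T, ∑ a, (D a : ℂ) * ψ t a‖ := by
        simp only [Finset.mul_sum]
        rw [Finset.sum_comm]
    _ ≤ ∑ t ∈ T, ‖∑ a, (D a : ℂ) * ψ t a‖ := norm_sum_le _ _
    _ ≤ ∑ t ∈ T, ((if ψ t = 1 then 1 else 0) + ν) := Finset.sum_le_sum fun t _ => hterm t
    _ = _ := by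
        rw [Finset.sum_add_distrib, Finset.sum_boole, Finset.sum_const, nsmul_eq_mul]

end Character

section Walk

variable {V : Type*}

/-- The vertices `f 0, …, f N` form a walk in `G`. -/
def IsWalkSeq (G : SimpleGraph V) {N : ℕ} (f : Fin (N + 1) → V) : Prop :=
  ∀ i : Fin N, G.Adj (f i.castSucc) (f i.succ)

/-- The vertices `x 0, …, x m` form a non-backtracking walk in `G`. -/
structure IsNonbacktrackingWalk (G : SimpleGraph V) {m : ℕ} (x : Fin (m + 1) → V) : Prop where
  isWalkSeq : IsWalkSeq G x
  ne : ∀ (i : ℕ) (h : i + 1 < m), x ⟨i + 2, by omega⟩ ≠ x ⟨i, by omega⟩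

/-- The sequence `x 0, …, x m = y m, …, y 0`, which follows `x` and returns along `y`. It is
meaningful when `x` and `y` end at the same vertex. -/
def thereAndBack {m : ℕ} (x y : Fin (m + 1) → V) (i : Fin (2 * m + 1)) : V :=
  if h : i.1 ≤ m then x ⟨i, by omega⟩ else y ⟨2 * m - i, by omega⟩

variable {m : ℕ} {x y : Fin (m + 1) → V}

theorem thereAndBack_of_le {i : ℕ} (h : i ≤ m) :
    thereAndBack x y ⟨i, by omega⟩ = x ⟨i, by omega⟩ :=
  dif_pos h

theorem thereAndBack_two_mul_sub (hlast : x (Fin.last m) = y (Fin.last m)) {i : ℕ} (h : i ≤ m) :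
    thereAndBack x y ⟨2 * m - i, by omega⟩ = y ⟨i, by omega⟩ := by
  rcases h.eq_or_lt with rfl | h
  · simp only [two_mul, Nat.add_sub_cancel]
    exact (thereAndBack_of_le le_rfl).trans hlast
  · have hne : ¬ 2 * m - i ≤ m := by omega
    simp only [thereAndBack, dif_neg hne, Nat.sub_sub_self (show i ≤ 2 * m by omega)]

theorem IsNonbacktrackingWalk.isHike_thereAndBack {G : SimpleGraph V}
    (hx : IsNonbacktrackingWalk G x) (hy : IsNonbacktrackingWalk G y) (hfirst : x 0 = y 0)
    (hlast : x (Fin.last m) = y (Fin.last m)) : IsHike G m (thereAndBack x y) := by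
  refine ⟨fun i hi => ?_, ?_, fun i h1 hi him => ?_⟩
  · rcases lt_or_ge i m with h | h
    · rw [thereAndBack_of_le h.le, thereAndBack_of_le h]
      exact hx.isWalkSeq ⟨i, h⟩
    · obtain ⟨j, hj, rfl⟩ : ∃ j < m, i = 2 * m - (j + 1) := ⟨2 * m - i - 1, by omega, by omega⟩
      simp only [show 2 * m - (j + 1) + 1 = 2 * m - j by omega]
      rw [thereAndBack_two_mul_sub hlast hj, thereAndBack_two_mul_sub hlast hj.le]
      exact (hy.isWalkSeq ⟨j, hj⟩).symm
  · exact (thereAndBack_two_mul_sub hlast m.zero_le).trans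
      (hfirst.symm.trans (thereAndBack_of_le m.zero_le).symm)
  · rcases lt_or_gt_of_ne him with h | h
    · obtain ⟨j, rfl⟩ : ∃ j, i = j + 1 := ⟨i - 1, by omega⟩
      simp only [Nat.add_sub_cancel]
      rw [thereAndBack_of_le h, thereAndBack_of_le (by omega)]
      exact hx.ne j h
    · obtain ⟨j, hj, rfl⟩ : ∃ j, j + 1 < m ∧ i = 2 * m - (j + 1) :=
        ⟨2 * m - i - 1, by omega, by omega⟩
      simp only [show 2 * m - (j + 1) + 1 = 2 * m - j by omega,
        show 2 * m - (j + 1) - 1 = 2 * m - (j + 2) by omega]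
      rw [thereAndBack_two_mul_sub hlast (by omega), thereAndBack_two_mul_sub hlast hj]
      exact (hy.ne j hj).symm

theorem prod_steps_thereAndBack {M : Type*} [CommMonoid M] (g : V → V → M)
    (hlast : x (Fin.last m) = y (Fin.last m)) :
    ∏ i : Fin (2 * m), g (thereAndBack x y i.castSucc) (thereAndBack x y i.succ) =
      (∏ i : Fin m, g (x i.castSucc) (x i.succ)) * ∏ i : Fin m, g (y i.succ) (y i.castSucc) := by
  rw [← (finCongr (two_mul m).symm).prod_comp, Fin.prod_univ_add]
  congr 1
  · refine Finset.prod_congr rfl fun i _ => ?_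
    exact congrArg₂ g (thereAndBack_of_le i.2.le) (thereAndBack_of_le i.2)
  · rw [← Equiv.prod_comp Fin.revPerm]
    refine Finset.prod_congr rfl fun i _ => congrArg₂ g ?_ ?_
    · refine (congrArg _ (Fin.ext ?_)).trans (thereAndBack_two_mul_sub hlast i.2)
      simp only [Fin.revPerm_apply, finCongr_apply, Fin.val_castSucc, Fin.val_cast, Fin.val_natAdd,
        Fin.val_rev]
      omega
    · refine (congrArg _ (Fin.ext ?_)).trans (thereAndBack_two_mul_sub hlast i.2.le)
      simp only [Fin.revPerm_apply, finCongr_apply, Fin.val_succ, Fin.val_cast, Fin.val_natAdd,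
        Fin.val_rev]
      omega

theorem card_isWalkSeq_extension_le [Fintype V] {G : SimpleGraph V} {d : ℕ}
    (hdeg : ∀ v, G.degree v ≤ d) {N : ℕ} (g : Fin (N + 1) → V) :
    (Finset.univ.filter fun f : Fin (N + 2) → V => IsWalkSeq G f ∧ Fin.init f = g).card ≤ d := by
  refine le_trans ?_ (hdeg (g (Fin.last N)))
  rw [← SimpleGraph.card_neighborFinset_eq_degree]
  refine Finset.card_le_card_of_injOn (fun f => f (Fin.last _)) (fun f hf => ?_)
    fun f hf f' hf' hlast => ?_
  · obtain ⟨hwalk, rfl⟩ := (Finset.mem_filter.mp hf).2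
    exact (G.mem_neighborFinset _ _).mpr (hwalk (Fin.last N))
  · have hinit : (Fin.init f : Fin (N + 1) → V) = Fin.init f' :=
      (Finset.mem_filter.mp hf).2.2.trans (Finset.mem_filter.mp hf').2.2.symm
    rw [← Fin.snoc_init_self f, ← Fin.snoc_init_self f', hinit]
    exact congrArg _ hlast

theorem card_isWalkSeq_le [Fintype V] {G : SimpleGraph V} {d : ℕ}
    (hdeg : ∀ v, G.degree v ≤ d) (N : ℕ) :
    (Finset.univ.filter fun f : Fin (N + 1) → V => IsWalkSeq G f).card ≤
      Fintype.card V * d ^ N := by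
  induction N with
  | zero => simp [IsWalkSeq]
  | succ N ih =>
    calc (Finset.univ.filter fun f : Fin (N + 2) → V => IsWalkSeq G f).card
        ≤ d * (Finset.univ.filter fun f : Fin (N + 1) → V => IsWalkSeq G f).card := by
          refine Finset.card_le_mul_card_image_of_maps_to (f := fun f => Fin.init f)
            (fun f hf => ?_) d fun g _ => ?_
          · rw [Finset.mem_filter_univ] at hf ⊢
            exact fun i => hf i.castSucc
          · rw [Finset.filter_filter]
            exact card_isWalkSeq_extension_le hdeg g
      _ ≤ d * (Fintype.card V * d ^ N) := Nat.mul_le_mul_left d ih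
      _ = Fintype.card V * d ^ (N + 1) := by ring

theorem IsHike.isWalkSeq {G : SimpleGraph V} {f : Fin (2 * m + 1) → V} (hf : IsHike G m f) :
    IsWalkSeq G f :=
  fun i => hf.1 i i.2

theorem ncard_isHike_le [Fintype V] {G : SimpleGraph V} {d : ℕ} (hdeg : ∀ v, G.degree v ≤ d)
    (m : ℕ) : {f | IsHike G m f}.ncard ≤ Fintype.card V * d ^ (2 * m) := by
  rw [Set.ncard_eq_toFinset_card']
  refine (Finset.card_le_card fun f hf => ?_).trans (card_isWalkSeq_le hdeg (2 * m))
  exact (Finset.mem_filter_univ f).mpr (Set.mem_toFinset.mp hf).isWalkSeq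

theorem exists_step_forall_ne_of_not_isSingletonFree [DecidableEq V] {f : Fin (2 * m + 1) → V}
    (hf : ¬ IsSingletonFree m f) :
    ∃ i₀ : Fin (2 * m), ∀ i ≠ i₀, s(f i.castSucc, f i.succ) ≠ s(f i₀.castSucc, f i₀.succ) := by
  simp only [IsSingletonFree, not_forall, not_not] at hf
  obtain ⟨e, he⟩ := hf
  obtain ⟨i₀, hi₀⟩ := Finset.card_eq_one.mp he
  have traverses_iff (i : Fin (2 * m)) : s(f i.castSucc, f i.succ) = e ↔ i = i₀ := by
    have hmem := Finset.ext_iff.mp hi₀ i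
    rwa [Finset.mem_filter_univ, Finset.mem_singleton] at hmem
  refine ⟨i₀, fun i hi => ?_⟩
  rw [(traverses_iff i₀).mpr rfl]
  exact fun h => hi ((traverses_iff i).mp h)

end Walk

section Signing

variable {n : ℕ} {G : SimpleGraph (Fin n)} {H : Type*} [Group H]

theorem sHat_coe (sg : OEdge G → H) (o : OEdge G) : sHat G sg o.1.1 o.1.2 = sg o :=
  dif_pos o.2

theorem sHat_inv (sg : OEdge G → H) (u v : Fin n) : (sHat G sg u v)⁻¹ = sHat G sg v u := by
  unfold sHat
  rcases lt_trichotomy u v with h | rfl | h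
  · by_cases hadj : G.Adj u v <;> simp [h, h.not_gt, hadj]
  · simp
  · by_cases hadj : G.Adj v u <;> simp [h, h.not_gt, hadj]

theorem sHat_swap_coe (sg : OEdge G → H) (o : OEdge G) : sHat G sg o.1.2 o.1.1 = (sg o)⁻¹ := by
  rw [← sHat_inv, sHat_coe]

theorem sHat_of_not_adj (sg : OEdge G → H) {u v : Fin n} (h : ¬ G.Adj u v) : sHat G sg u v = 1 := by
  rw [sHat, dif_neg fun h' => h h'.1, dif_neg fun h' => h h'.1.symm]

theorem exists_oEdge_of_adj {u v : Fin n} (h : G.Adj u v) :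
    ∃ o : OEdge G, s(u, v) = s(o.1.1, o.1.2) := by
  rcases lt_or_gt_of_ne h.ne with hlt | hgt
  · exact ⟨⟨(u, v), h, hlt⟩, rfl⟩
  · exact ⟨⟨(v, u), h.symm, hgt⟩, Sym2.eq_swap⟩

theorem sHat_mulSingle_of_ne (h : H) {o : OEdge G} {u v : Fin n} (hne : s(u, v) ≠ s(o.1.1, o.1.2)) :
    sHat G (Pi.mulSingle o h) u v = 1 := by
  by_cases huv : G.Adj u v
  · obtain ⟨o', ho'⟩ := exists_oEdge_of_adj huv
    have ho'_ne : o' ≠ o := by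
      rintro rfl
      exact hne ho'
    rcases Sym2.eq_iff.mp ho' with ⟨rfl, rfl⟩ | ⟨rfl, rfl⟩
    · rw [sHat_coe, Pi.mulSingle_eq_of_ne ho'_ne]
    · rw [sHat_swap_coe, Pi.mulSingle_eq_of_ne ho'_ne, inv_one]
  · exact sHat_of_not_adj _ huv

theorem map_sHat_mul (χ : H →* ℂ) (a b : OEdge G → H) (u v : Fin n) :
    χ (sHat G (a * b) u v) = χ (sHat G a u v) * χ (sHat G b u v) := by
  by_cases huv : G.Adj u v
  · obtain ⟨o, ho⟩ := exists_oEdge_of_adj huv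
    rcases Sym2.eq_iff.mp ho with ⟨rfl, rfl⟩ | ⟨rfl, rfl⟩
    · simp only [sHat_coe, Pi.mul_apply, map_mul]
    · simp only [sHat_swap_coe, Pi.mul_apply, mul_inv_rev, map_mul, mul_comm]
  · simp only [sHat_of_not_adj _ huv, map_one, mul_one]

theorem sHat_one (u v : Fin n) : sHat G (1 : OEdge G → H) u v = 1 := by
  by_cases huv : G.Adj u v
  · obtain ⟨o, ho⟩ := exists_oEdge_of_adj huv
    rcases Sym2.eq_iff.mp ho with ⟨rfl, rfl⟩ | ⟨rfl, rfl⟩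
    · rw [sHat_coe, Pi.one_apply]
    · rw [sHat_swap_coe, Pi.one_apply, inv_one]
  · exact sHat_of_not_adj _ huv

variable (G) in
/-- The character `s ↦ χ (s(u, v))` of the group of signings. -/
def stepCharacter (χ : H →* ℂ) (u v : Fin n) : (OEdge G → H) →* ℂ where
  toFun sg := χ (sHat G sg u v)
  map_one' := by rw [sHat_one, map_one]
  map_mul' a b := map_sHat_mul χ a b u v

variable (G) in
/-- The character `s ↦ ∏ χ (s(f i, f (i + 1)))` of the group of signings, which records the sign of
the vertex sequence `f`. -/
def walkCharacter (χ : H →* ℂ) {N : ℕ} (f : Fin (N + 1) → Fin n) : (OEdge G → H) →* ℂ :=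
  ∏ i : Fin N, stepCharacter G χ (f i.castSucc) (f i.succ)

theorem walkCharacter_apply (χ : H →* ℂ) {N : ℕ} (f : Fin (N + 1) → Fin n) (sg : OEdge G → H) :
    walkCharacter G χ f sg = ∏ i : Fin N, χ (sHat G sg (f i.castSucc) (f i.succ)) :=
  MonoidHom.finsetProd_apply (fun i : Fin N => stepCharacter G χ (f i.castSucc) (f i.succ)) _ sg

theorem map_sHat_mulSingle_ne_one {χ : H →* ℂ} {h : H} (hh : χ h ≠ 1) {o : OEdge G} {u v : Fin n}
    (heq : s(u, v) = s(o.1.1, o.1.2)) : χ (sHat G (Pi.mulSingle o h) u v) ≠ 1 := by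
  rcases Sym2.eq_iff.mp heq with ⟨rfl, rfl⟩ | ⟨rfl, rfl⟩
  · rwa [sHat_coe, Pi.mulSingle_eq_same]
  · rw [sHat_swap_coe, Pi.mulSingle_eq_same]
    intro hinv
    have hmul : χ h * χ h⁻¹ = 1 := by rw [← map_mul, mul_inv_cancel, map_one]
    exact hh (by rwa [hinv, mul_one] at hmul)

/-- Changing the signing only on the edge traversed once changes exactly one factor. -/
theorem walkCharacter_ne_one {χ : H →* ℂ} (hχ : χ ≠ 1) {N : ℕ} {f : Fin (N + 1) → Fin n}
    (hf : IsWalkSeq G f) {i₀ : Fin N}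
    (hi₀ : ∀ i ≠ i₀, s(f i.castSucc, f i.succ) ≠ s(f i₀.castSucc, f i₀.succ)) :
    walkCharacter G χ f ≠ 1 := by
  obtain ⟨h, hh⟩ : ∃ h, χ h ≠ 1 := by
    by_contra! hc
    exact hχ (MonoidHom.ext hc)
  obtain ⟨o, ho⟩ := exists_oEdge_of_adj (hf i₀)
  intro hone
  have hval := DFunLike.congr_fun hone (Pi.mulSingle o h)
  rw [walkCharacter_apply, Finset.prod_eq_single i₀ (fun i _ hi => ?_) (by simp)] at hval
  · exact map_sHat_mulSingle_ne_one hh ho hval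
  · rw [sHat_mulSingle_of_ne h (ho ▸ hi₀ i hi), map_one]

end Signing

section DartWalk

variable {n : ℕ} {G : SimpleGraph (Fin n)} {H : Type*} [Group H]

/-- Each directed edge of the sequence `w` starts where the previous one ends and does not reverse
it. These are the walks that contribute to the powers of the non-backtracking matrix. -/
def IsNonbacktrackingDartSeq {j : ℕ} (w : Fin (j + 1) → DEdge G) : Prop :=
  ∀ i : Fin j, (w i.castSucc).1.2 = (w i.succ).1.1 ∧ (w i.castSucc).1.1 ≠ (w i.succ).1.2

theorem walkWeight_Bmat (sg : OEdge G → H) (χ : H →* ℂ) {j : ℕ} (w : Fin (j + 1) → DEdge G) :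
    walkWeight (Bmat G sg χ) w =
      if IsNonbacktrackingDartSeq w then ∏ i : Fin j, χ (sHat G sg (w i.succ).1.1 (w i.succ).1.2)
      else 0 := by
  simp only [walkWeight, Bmat, Fintype.prod_ite_zero, IsNonbacktrackingDartSeq]
  congr

/-- The heads of all directed edges of `w` but the last, which are the inner vertices of the walk
that `w` describes. -/
def innerVertices {m : ℕ} (w : Fin (m + 2) → DEdge G) (i : Fin (m + 1)) : Fin n :=
  (w i.castSucc).1.2

namespace IsNonbacktrackingDartSeq

theorem ext {j : ℕ} {w v : Fin (j + 1) → DEdge G} (hw : IsNonbacktrackingDartSeq w)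
    (hv : IsNonbacktrackingDartSeq v) (hfst : (w 0).1.1 = (v 0).1.1)
    (hsnd : ∀ i, (w i).1.2 = (v i).1.2) : w = v := by
  refine funext fun i => Subtype.ext (Prod.ext ?_ (hsnd i))
  cases i using Fin.cases with
  | zero => exact hfst
  | succ i => rw [← (hw i).1, ← (hv i).1, hsnd]

theorem innerVertices_castSucc {m : ℕ} {w : Fin (m + 2) → DEdge G}
    (hw : IsNonbacktrackingDartSeq w) (i : Fin m) :
    innerVertices w i.castSucc = (w i.castSucc.succ).1.1 :=
  (hw i.castSucc).1

theorem innerVertices_last {m : ℕ} {w : Fin (m + 2) → DEdge G} (hw : IsNonbacktrackingDartSeq w) :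
    innerVertices w (Fin.last m) = (w (Fin.last (m + 1))).1.1 :=
  (hw (Fin.last m)).1

theorem isNonbacktrackingWalk_innerVertices {m : ℕ} {w : Fin (m + 2) → DEdge G}
    (hw : IsNonbacktrackingDartSeq w) : IsNonbacktrackingWalk G (innerVertices w) where
  isWalkSeq i := by
    rw [hw.innerVertices_castSucc]
    exact (w i.castSucc.succ).2
  ne i hi := by
    have hstep := (hw ⟨i + 1, by omega⟩).2
    have hchain := (hw ⟨i, by omega⟩).1
    exact fun h => hstep (hchain.symm.trans h.symm)

theorem walkWeight_Bmat_eq {m : ℕ} {w : Fin (m + 2) → DEdge G} (hw : IsNonbacktrackingDartSeq w)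
    (sg : OEdge G → H) (χ : H →* ℂ) :
    walkWeight (Bmat G sg χ) w =
      (∏ i : Fin m, χ (sHat G sg (innerVertices w i.castSucc) (innerVertices w i.succ))) *
        χ (sHat G sg (w (Fin.last (m + 1))).1.1 (w (Fin.last (m + 1))).1.2) := by
  rw [walkWeight_Bmat, if_pos hw, Fin.prod_univ_castSucc]
  simp only [hw.innerVertices_castSucc]
  rfl

end IsNonbacktrackingDartSeq

/-- A pair of non-backtracking sequences of directed edges with the same first and the same last
edge, as they occur in the expansion of the Frobenius norm of a power of `Bmat`. -/
structure IsHikePair {m : ℕ} (ww : (Fin (m + 2) → DEdge G) × (Fin (m + 2) → DEdge G)) : Prop where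
  fst : IsNonbacktrackingDartSeq ww.1
  snd : IsNonbacktrackingDartSeq ww.2
  first : ww.1 0 = ww.2 0
  last : ww.1 (Fin.last (m + 1)) = ww.2 (Fin.last (m + 1))

/-- The closed walk along the inner vertices of the first sequence and back along those of the
second. -/
def hikeOfPair {m : ℕ} (ww : (Fin (m + 2) → DEdge G) × (Fin (m + 2) → DEdge G)) :
    Fin (2 * m + 1) → Fin n :=
  thereAndBack (innerVertices ww.1) (innerVertices ww.2)

namespace IsHikePair

variable {m : ℕ} {ww vv : (Fin (m + 2) → DEdge G) × (Fin (m + 2) → DEdge G)}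

theorem innerVertices_last (h : IsHikePair ww) :
    innerVertices ww.1 (Fin.last m) = innerVertices ww.2 (Fin.last m) := by
  rw [h.fst.innerVertices_last, h.snd.innerVertices_last, h.last]

theorem isHike (h : IsHikePair ww) : IsHike G m (hikeOfPair ww) :=
  h.fst.isNonbacktrackingWalk_innerVertices.isHike_thereAndBack
    h.snd.isNonbacktrackingWalk_innerVertices
    (congrArg (fun e : DEdge G => e.1.2) h.first) h.innerVertices_last

/-- The common last edge contributes `χ(s)` and its conjugate, which cancel. -/
theorem walkWeight_mul_conj [Finite H] (h : IsHikePair ww) (sg : OEdge G → H) (χ : H →* ℂ) :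
    walkWeight (Bmat G sg χ) ww.1 * starRingEnd ℂ (walkWeight (Bmat G sg χ) ww.2) =
      walkCharacter G χ (hikeOfPair ww) sg := by
  rw [h.fst.walkWeight_Bmat_eq, h.snd.walkWeight_Bmat_eq, walkCharacter_apply, hikeOfPair,
    prod_steps_thereAndBack (fun u v => χ (sHat G sg u v)) h.innerVertices_last, ← h.last]
  simp only [map_mul, map_prod, conj_map_eq_map_inv, sHat_inv]
  rw [mul_mul_mul_comm, ← map_mul χ, ← sHat_inv, inv_mul_cancel, map_one, mul_one]

theorem innerVertices_fst_eq (hike : hikeOfPair ww = hikeOfPair vv) :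
    innerVertices ww.1 = innerVertices vv.1 := by
  funext i
  have hi := congrFun hike ⟨i, by omega⟩
  rwa [hikeOfPair, hikeOfPair, thereAndBack_of_le i.is_le, thereAndBack_of_le i.is_le] at hi

theorem innerVertices_snd_eq (hw : IsHikePair ww) (hv : IsHikePair vv)
    (hike : hikeOfPair ww = hikeOfPair vv) : innerVertices ww.2 = innerVertices vv.2 := by
  funext i
  have hi := congrFun hike ⟨2 * m - i, by omega⟩
  rwa [hikeOfPair, hikeOfPair, thereAndBack_two_mul_sub hw.innerVertices_last i.is_le,
    thereAndBack_two_mul_sub hv.innerVertices_last i.is_le] at hi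

theorem ext (hw : IsHikePair ww) (hv : IsHikePair vv) (hike : hikeOfPair ww = hikeOfPair vv)
    (hfirst : (ww.1 0).1.1 = (vv.1 0).1.1)
    (hlast : (ww.1 (Fin.last (m + 1))).1.2 = (vv.1 (Fin.last (m + 1))).1.2) : ww = vv := by
  refine Prod.ext (hw.fst.ext hv.fst hfirst fun i => ?_) (hw.snd.ext hv.snd ?_ fun i => ?_)
  · cases i using Fin.lastCases with
    | last => exact hlast
    | cast i => exact congrFun (innerVertices_fst_eq hike) i
  · rw [← hw.first, ← hv.first, hfirst]
  · cases i using Fin.lastCases with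
    | last => rw [← hw.last, ← hv.last, hlast]
    | cast i => exact congrFun (innerVertices_snd_eq hw hv hike) i

/-- A hike pair is determined by its hike and the two outer vertices, for each of which there are at
most `d` choices. -/
theorem card_fiber_le {d : ℕ} (hdeg : ∀ v, G.degree v ≤ d) (f : Fin (2 * m + 1) → Fin n) :
    (Finset.univ.filter fun ww : (Fin (m + 2) → DEdge G) × (Fin (m + 2) → DEdge G) =>
      IsHikePair ww ∧ hikeOfPair ww = f).card ≤ d ^ 2 := by
  have hcard : (G.neighborFinset (f ⟨0, by omega⟩) ×ˢ G.neighborFinset (f ⟨m, by omega⟩)).card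
      ≤ d ^ 2 := by
    rw [Finset.card_product, SimpleGraph.card_neighborFinset_eq_degree,
      SimpleGraph.card_neighborFinset_eq_degree, sq]
    exact Nat.mul_le_mul (hdeg _) (hdeg _)
  refine le_trans (Finset.card_le_card_of_injOn
    (fun ww => ((ww.1 0).1.1, (ww.1 (Fin.last (m + 1))).1.2)) (fun ww hww => ?_)
    fun ww hww vv hvv heq => ?_) hcard
  · obtain ⟨hpair, rfl⟩ := (Finset.mem_filter.mp hww).2
    rw [Finset.mem_coe, Finset.mem_product, SimpleGraph.mem_neighborFinset,
      SimpleGraph.mem_neighborFinset, hikeOfPair, thereAndBack_of_le m.zero_le,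
      thereAndBack_of_le le_rfl]
    refine ⟨(ww.1 0).2.symm, ?_⟩
    have hlast : innerVertices ww.1 ⟨m, by omega⟩ = _ := hpair.fst.innerVertices_last
    rw [hlast]
    exact (ww.1 (Fin.last (m + 1))).2
  · obtain ⟨hw, hike_w⟩ := (Finset.mem_filter.mp hww).2
    obtain ⟨hv, hike_v⟩ := (Finset.mem_filter.mp hvv).2
    obtain ⟨hfirst, hlast⟩ := Prod.ext_iff.mp heq
    exact hw.ext hv (hike_w.trans hike_v.symm) hfirst hlast

theorem card_le {d : ℕ} (hdeg : ∀ v, G.degree v ≤ d) (P : (Fin (2 * m + 1) → Fin n) → Prop) :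
    (Finset.univ.filter fun ww : (Fin (m + 2) → DEdge G) × (Fin (m + 2) → DEdge G) =>
      IsHikePair ww ∧ P (hikeOfPair ww)).card ≤ d ^ 2 * {f | IsHike G m f ∧ P f}.ncard := by
  rw [Set.ncard_eq_toFinset_card']
  refine Finset.card_le_mul_card_image_of_maps_to (f := hikeOfPair) (fun ww hww => ?_) _
    fun f _ => ?_
  · obtain ⟨hpair, hP⟩ := (Finset.mem_filter.mp hww).2
    exact Set.mem_toFinset.mpr ⟨hpair.isHike, hP⟩
  · refine (Finset.card_le_card fun ww hww => ?_).trans (card_fiber_le hdeg f)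
    simp only [Finset.mem_filter, Finset.mem_univ, true_and] at hww ⊢
    exact ⟨hww.1.1, hww.2⟩

end IsHikePair

end DartWalk

section Expectation

open scoped Matrix.Norms.Frobenius

variable {n d m : ℕ} {G : SimpleGraph (Fin n)} {H : Type*} [Group H]

theorem frobenius_norm_Bmat_pow_sq [Finite H] (sg : OEdge G → H) (χ : H →* ℂ) (m : ℕ) :
    ((‖Bmat G sg χ ^ (m + 1)‖ ^ 2 : ℝ) : ℂ) =
      ∑ ww : (Fin (m + 2) → DEdge G) × (Fin (m + 2) → DEdge G) with IsHikePair ww,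
        walkCharacter G χ (hikeOfPair ww) sg := by
  refine (frobenius_norm_pow_sq_eq_sum_walkWeight (𝕜 := ℂ) (Bmat G sg χ) (m + 1)).trans ?_
  rw [Finset.sum_filter, Finset.sum_filter]
  refine Finset.sum_congr rfl fun ww _ => ?_
  by_cases hww : IsHikePair ww
  · rw [if_pos hww, if_pos (Prod.ext hww.first hww.last), hww.walkWeight_mul_conj]
  · rw [if_neg hww, ite_eq_right_iff]
    intro hends
    obtain ⟨hfirst, hlast⟩ := Prod.ext_iff.mp hends
    by_cases hfst : IsNonbacktrackingDartSeq ww.1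
    · have hsnd : ¬ IsNonbacktrackingDartSeq ww.2 := fun hsnd => hww ⟨hfst, hsnd, hfirst, hlast⟩
      rw [walkWeight_Bmat sg χ ww.2, if_neg hsnd, map_zero, mul_zero]
    · rw [walkWeight_Bmat, if_neg hfst, zero_mul]

theorem isSingletonFree_of_walkCharacter_eq_one {χ : H →* ℂ} (hχ : χ ≠ 1)
    {f : Fin (2 * m + 1) → Fin n} (hf : IsWalkSeq G f) (hone : walkCharacter G χ f = 1) :
    IsSingletonFree m f := by
  by_contra hnot
  obtain ⟨i₀, hi₀⟩ := exists_step_forall_ne_of_not_isSingletonFree hnot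
  exact walkCharacter_ne_one hχ hf hi₀ hone

theorem expectation_frobenius_norm_Bmat_pow_sq_le [Fintype H] (hdeg : ∀ v, G.degree v ≤ d)
    {D : (OEdge G → H) → ℝ} {ν : ℝ} (hD : IsBiased D ν) (hD_sum : ∑ sg, D sg = 1) (hν : 0 ≤ ν)
    {χ : H →* ℂ} (hχ : χ ≠ 1) (m : ℕ) :
    ∑ sg, D sg * ‖Bmat G sg χ ^ (m + 1)‖ ^ 2 ≤
      d ^ 2 * ({f | IsHike G m f ∧ IsSingletonFree m f}.ncard : ℝ) +
        d ^ 2 * (n * d ^ (2 * m)) * ν := by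
  set pairs : Finset ((Fin (m + 2) → DEdge G) × (Fin (m + 2) → DEdge G)) :=
    Finset.univ.filter IsHikePair with hpairs
  have hexpand : ((∑ sg, D sg * ‖Bmat G sg χ ^ (m + 1)‖ ^ 2 : ℝ) : ℂ) =
      ∑ sg, (D sg : ℂ) * ∑ ww ∈ pairs, walkCharacter G χ (hikeOfPair ww) sg := by
    simp only [Complex.ofReal_sum, Complex.ofReal_mul, frobenius_norm_Bmat_pow_sq, hpairs]
  have htrivial : {ww ∈ pairs | walkCharacter G χ (hikeOfPair ww) = 1}.card ≤
      d ^ 2 * {f | IsHike G m f ∧ IsSingletonFree m f}.ncard := by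
    refine (Finset.card_le_card fun ww hww => ?_).trans
      (IsHikePair.card_le hdeg (IsSingletonFree m))
    rw [hpairs, Finset.filter_filter, Finset.mem_filter_univ] at hww
    exact (Finset.mem_filter_univ ww).mpr
      ⟨hww.1, isSingletonFree_of_walkCharacter_eq_one hχ hww.1.isHike.isWalkSeq hww.2⟩
  have hall : pairs.card ≤ d ^ 2 * (n * d ^ (2 * m)) := by
    have hcard := IsHikePair.card_le (m := m) hdeg fun _ => True
    simp only [and_true] at hcard
    exact hcard.trans (Nat.mul_le_mul_left _ ((ncard_isHike_le hdeg m).trans_eq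
      (by rw [Fintype.card_fin])))
  calc ∑ sg, D sg * ‖Bmat G sg χ ^ (m + 1)‖ ^ 2
      ≤ ‖((∑ sg, D sg * ‖Bmat G sg χ ^ (m + 1)‖ ^ 2 : ℝ) : ℂ)‖ :=
        (le_abs_self _).trans_eq (Complex.norm_real _).symm
    _ ≤ ({ww ∈ pairs | walkCharacter G χ (hikeOfPair ww) = 1}.card : ℝ) + pairs.card * ν := by
        rw [hexpand]
        exact hD.norm_expectation_sum_le hD_sum hν pairs _
    _ ≤ _ := by
        gcongr
        · exact_mod_cast htrivial
        · exact_mod_cast hall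

theorem pow_mul_sum_spectrum_gt_le [Fintype H] (hdeg : ∀ v, G.degree v ≤ d)
    {D : (OEdge G → H) → ℝ} (hD_nonneg : ∀ sg, 0 ≤ D sg) {ν : ℝ} (hD : IsBiased D ν)
    (hD_sum : ∑ sg, D sg = 1) (hν : 0 ≤ ν) {χ : H →* ℂ} (hχ : χ ≠ 1) (m : ℕ) {T : ℝ}
    (hT : 0 ≤ T) :
    T ^ (2 * (m + 1)) * ∑ sg with ¬ ∀ μ ∈ spectrum ℂ (Bmat G sg χ), ‖μ‖ ≤ T, D sg ≤
      d ^ 2 * ({f | IsHike G m f ∧ IsSingletonFree m f}.ncard : ℝ) +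
        d ^ 2 * (n * d ^ (2 * m)) * ν := by
  refine le_trans ?_ (expectation_frobenius_norm_Bmat_pow_sq_le hdeg hD hD_sum hν hχ m)
  exact mul_sum_filter_le_sum_mul hD_nonneg (fun _ => sq_nonneg _) fun sg hsg =>
    pow_le_frobenius_norm_pow_sq_of_not_spectrum_le hT hsg (m + 1)

end Expectation

section Threshold

theorem rpow_add_logb_div_pow {b a γ : ℝ} (hb : 0 < b) (hb_one : b ≠ 1) (ha : 0 < a) {N : ℕ}
    (hN : N ≠ 0) : (b ^ (γ + Real.logb b a / N)) ^ N = a * (b ^ γ) ^ N := by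
  rw [Real.rpow_add hb, mul_pow, mul_comm, ← Real.rpow_mul_natCast hb.le (Real.logb b a / N),
    div_mul_cancel₀ _ (Nat.cast_ne_zero.mpr hN), Real.rpow_logb hb hb_one ha]

theorem bias_term_le {n d ℓ ε : ℝ} (hn : 0 ≤ n) (hd : 1 ≤ d) (hℓ : 0 < ℓ) (hε : 0 ≤ ε) (m : ℕ) :
    ℓ * (d ^ 2 * (n * d ^ (2 * m)) * ((n * ℓ * d ^ 2)⁻¹ * (ε / d) ^ (2 * (m + 1)))) ≤
      ε ^ (2 * (m + 1)) := by
  rcases hn.eq_or_lt with rfl | hn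
  · simp only [zero_mul, inv_zero, mul_zero]
    positivity
  · calc _ = ε ^ (2 * (m + 1)) / d ^ 2 := by
          rw [div_pow]
          field_simp
          ring
      _ ≤ ε ^ (2 * (m + 1)) := div_le_self (by positivity) (one_le_pow₀ hd)

end Threshold

theorem stmt13_general {n d k : ℕ} (hd : 1 ≤ d) (hk : 1 ≤ k) {ℓ ε : ℝ} (hℓ : 0 < ℓ) (hε : 0 < ε)
    {G : SimpleGraph (Fin n)} (hdeg : ∀ v, G.degree v ≤ d) {H : Type*} [Group H] [Fintype H]
    {ν γ : ℝ} {D : (OEdge G → H) → ℝ} (hD_nonneg : ∀ sg, 0 ≤ D sg) (hD_sum : ∑ sg, D sg = 1)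
    (hD : IsBiased D ν) (hν : ν ≤ ((n : ℝ) * ℓ * d ^ 2)⁻¹ * (ε / d) ^ (2 * k))
    (hcount : ({f : Fin (2 * (k - 1) + 1) → Fin n |
        IsHike G (k - 1) f ∧ IsSingletonFree (k - 1) f}.ncard : ℝ)
        ≤ ((2 : ℝ) ^ γ * √((d : ℝ) - 1)) ^ (2 * k))
    {χ : H →* ℂ} (hχ : χ ≠ 1) :
    ∑ sg with ¬ ∀ μ ∈ spectrum ℂ (Bmat G sg χ), ‖μ‖ ≤
        (2 : ℝ) ^ (γ + Real.logb 2 (ℓ * d ^ 2) / (2 * k)) * √((d : ℝ) - 1) + ε, D sg ≤ 1 / ℓ := by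
  obtain ⟨m, rfl⟩ : ∃ m, k = m + 1 := ⟨k - 1, by omega⟩
  rw [Nat.add_sub_cancel] at hcount
  set R : ℝ := (2 : ℝ) ^ (γ + Real.logb 2 (ℓ * d ^ 2) / (2 * (m + 1 : ℕ))) * √((d : ℝ) - 1)
  set δ : ℝ := ((n : ℝ) * ℓ * d ^ 2)⁻¹ * (ε / d) ^ (2 * (m + 1))
  have hR : 0 ≤ R := by positivity
  have hR_pow : R ^ (2 * (m + 1)) =
      ℓ * d ^ 2 * ((2 : ℝ) ^ γ * √((d : ℝ) - 1)) ^ (2 * (m + 1)) := by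
    have hrpow := rpow_add_logb_div_pow (γ := γ) two_pos (by norm_num)
      (show 0 < ℓ * (d : ℝ) ^ 2 by positivity) (show 2 * (m + 1) ≠ 0 by omega)
    push_cast at hrpow
    simp only [R, mul_pow, Nat.cast_add, Nat.cast_one, hrpow]
    ring
  have hbias : ℓ * (d ^ 2 * (n * d ^ (2 * m)) * δ) ≤ ε ^ (2 * (m + 1)) :=
    bias_term_le n.cast_nonneg (by exact_mod_cast hd) hℓ hε.le m
  have hmarkov := pow_mul_sum_spectrum_gt_le hdeg hD_nonneg
    (fun ψ hψ => (hD ψ hψ).trans hν) hD_sum (by positivity) hχ m (add_nonneg hR hε.le)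
  rw [le_div_iff₀' hℓ]
  refine le_of_mul_le_mul_left ?_ (show 0 < (R + ε) ^ (2 * (m + 1)) by positivity)
  calc _ = ℓ * ((R + ε) ^ (2 * (m + 1)) * _) := mul_left_comm _ _ _
    _ ≤ ℓ * (d ^ 2 * ((2 : ℝ) ^ γ * √((d : ℝ) - 1)) ^ (2 * (m + 1)) +
          d ^ 2 * (n * d ^ (2 * m)) * δ) := by
        gcongr
        exact hmarkov.trans (by gcongr)
    _ ≤ R ^ (2 * (m + 1)) + ε ^ (2 * (m + 1)) := by
        rw [mul_add, hR_pow, mul_assoc ℓ]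
        gcongr
    _ ≤ (R + ε) ^ (2 * (m + 1)) * 1 := by
        rw [mul_one]
        exact pow_add_pow_le hR hε.le (by omega)

/-- Given the counting bound on singleton-free hikes and a sufficiently small bias `ν`,
the spectral radius of `B_s(χ)` is, with probability at least `1 - 1/ℓ` over a `ν`-biased
signing, at most `2^γ'·√(d-1) + ε`. -/
theorem stmt13 {n d ℓ k : ℕ} (hd : 3 ≤ d) (hk : 1 ≤ k) (hℓ : 1 ≤ ℓ)
    (ε : ℝ) (hε0 : 0 < ε) (hε1 : ε < 1)
    (G : SimpleGraph (Fin n)) (hreg : G.IsRegularOfDegree d)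
    (Hsub : Subgroup (Equiv.Perm (Fin ℓ))) (habel : ∀ a b : Hsub, a * b = b * a)
    (ν γ : ℝ)
    (D : (OEdge G → Hsub) → ℝ) (hD0 : ∀ x, 0 ≤ D x) (hD1 : ∑ x, D x = 1)
    (hbias : ∀ ψ : (OEdge G → Hsub) →* ℂ, ψ ≠ 1 →
      ‖∑ x, (D x : ℂ) * ψ x‖ ≤ ν)
    (hν : ν ≤ ((n : ℝ) * ℓ * d ^ 2)⁻¹ * (ε / d) ^ (2 * k))
    (hcount : ({f : Fin (2 * (k - 1) + 1) → Fin n |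
        IsHike G (k - 1) f ∧ IsSingletonFree (k - 1) f}.ncard : ℝ)
        ≤ ((2 : ℝ) ^ γ * Real.sqrt ((d : ℝ) - 1)) ^ (2 * k))
    (χ : Hsub →* ℂ) (hχ : χ ≠ 1) :
    ∑ sg ∈ Finset.univ.filter (fun sg : OEdge G → Hsub =>
        ¬ ∀ μ ∈ spectrum ℂ (Bmat G sg χ), ‖μ‖ ≤
            (2 : ℝ) ^ (γ + Real.logb 2 ((ℓ : ℝ) * d ^ 2) / (2 * k)) *
              Real.sqrt ((d : ℝ) - 1) + ε),
      D sg ≤ 1 / ℓ := by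
  exact stmt13_general (by omega) hk (by exact_mod_cast hℓ) hε0 (fun v => (hreg v).le) hD0 hD1
    hbias hν hcount hχ
end
end
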